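/- arXiv:math/0702413 — 8 statements merged into one kernel-verified Lean document; each statement's English description precedes it below -/
import Mathlib

section
/- Let (Ω, ℱ, P) be a probability space and U : (0,∞) → ℝ a strictly increasing, strictly concave, twice continuously differentiable function whose relative risk-aversion coefficient A(x) = -x·U''(x)/U'(x) satisfies c₁ < A(x) < c₂ for all x > 0, for some constants 0 < c₁ < c₂ < ∞. Let ξ > 0 be a random variable with E[|U(ξ)|] < ∞, and let η = (η⁰, …, ηᵐ) be an (m+1)-dimensional random vector such that ηⁱ ≥ -K·ξ almost surely for all 0 ≤ i ≤ m, for some constant K > 0, and such that E[-U''(ξ)·‖η‖²] < ∞. Then the function w(s) = E[U(ξ + ⟨s, η⟩)] is well defined (the integrand is integrable) for every s ∈ ℝ^{m+1} with 0 ≤ sⁱ < 1/(K(m+1)) for each i, and on this region w admits the second-order expansion w(s) = w(0) + E[U'(ξ)⟨η, s⟩] + (1/2)·E[U''(ξ)·|⟨η, s⟩|²] + o(‖s‖²) as s → 0. -/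
/-!
The risk-aversion bounds say that `x * (-U'')` and `U'` are comparable: with `V = U'`, `W = U''`,
`c₁ V ≤ -(x W) ≤ c₂ V`.  The upper bound makes `x ^ c₂ * V x` nondecreasing, so
`V (t x) ≤ t ^ (-c₂) * V x` for `0 < t ≤ 1` (`marginal_scale`).  This has two consequences.

* `x * V x` is at most `C * (1 + |U x|)` (`mul_marginal_le`), so `ξ U'(ξ)` is integrable, and by
  AM-GM so is `U'(ξ) ‖η‖ ≤ ξ U'(ξ) + c₁⁻¹ (-U''(ξ)) ‖η‖²` (`marginal_mul_le`).  The tangent line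
  at `ξ` bounds `U(ξ + ⟨s, η⟩)` from above, and `ξ + ⟨s, η⟩ ≥ (1 - θ) ξ` with `θ = K ∑ sⁱ < 1` bounds
  it from below by `U ξ - C ξ U'(ξ)`: this is integrability of the integrand.
* `|W z| ≤ C |W x|` whenever `z ≥ x / 2` (`abs_second_le`), so for small `s` the second-order Taylor
  remainder at `ξ` is at most `C (-U''(ξ)) ‖η‖² ‖s‖²`.  Divided by `‖s‖²` it tends to `0` pointwise by
  continuity of `U''` (`taylor_two_isLittleO`),
  and dominated convergence gives the expansion.
-/

open MeasureTheory ProbabilityTheory Filter Topology Asymptotics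

/-! ### Second-order Taylor expansion on the line -/

/-- Second-order Taylor formula with Lagrange remainder, for `x` and `y` in either order. -/
lemma taylor_two {f g k : ℝ → ℝ} {x y : ℝ}
    (hf : ∀ t ∈ Set.uIcc x y, HasDerivAt f (g t) t)
    (hg : ∀ t ∈ Set.uIcc x y, HasDerivAt g (k t) t) :
    ∃ z ∈ Set.uIcc x y, f y = f x + g x * (y - x) + k z / 2 * (y - x) ^ 2 := by
  rcases eq_or_ne x y with rfl | hxy
  · exact ⟨x, Set.left_mem_uIcc, by ring⟩
  have hne : y - x ≠ 0 := sub_ne_zero.2 hxy.symm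
  -- `l` is chosen so that `t ↦ f t + g t * (y - t) + l * (y - t) ^ 2` agrees at `x` and `y`.
  obtain ⟨l, hl⟩ : ∃ l, f y = f x + g x * (y - x) + l * (y - x) ^ 2 :=
    ⟨(f y - f x - g x * (y - x)) / (y - x) ^ 2, by field_simp; ring⟩
  let p : ℝ → ℝ := fun t => f t + g t * (y - t) + l * (y - t) ^ 2
  have hp : ∀ t ∈ Set.uIcc x y, HasDerivAt p ((k t - 2 * l) * (y - t)) t := by
    intro t ht
    have h1 : HasDerivAt (fun t => y - t) (-1) t := by
      simpa using (hasDerivAt_id t).const_sub y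
    have := ((hf t ht).add ((hg t ht).mul h1)).add ((h1.pow 2).const_mul l)
    refine this.congr_deriv ?_
    push_cast
    ring
  have hpe : p x = p y := by simp [p, hl]
  have key : ∃ z ∈ Set.uIcc x y, z ≠ y ∧ (k z - 2 * l) * (y - z) = 0 := by
    rcases lt_or_gt_of_ne hxy with h | h
    · rw [Set.uIcc_of_le h.le] at hp ⊢
      obtain ⟨z, hz, hz0⟩ := exists_hasDerivAt_eq_zero h
        (fun t ht => (hp t ht).continuousAt.continuousWithinAt) hpe
        (fun t ht => hp t (Set.Ioo_subset_Icc_self ht))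
      exact ⟨z, Set.Ioo_subset_Icc_self hz, hz.2.ne, hz0⟩
    · rw [Set.uIcc_of_ge h.le] at hp ⊢
      obtain ⟨z, hz, hz0⟩ := exists_hasDerivAt_eq_zero h
        (fun t ht => (hp t ht).continuousAt.continuousWithinAt) hpe.symm
        (fun t ht => hp t (Set.Ioo_subset_Icc_self ht))
      exact ⟨z, Set.Ioo_subset_Icc_self hz, hz.1.ne', hz0⟩
  obtain ⟨z, hz, hzy, h0⟩ := key
  refine ⟨z, hz, ?_⟩
  have : k z - 2 * l = 0 := (mul_eq_zero.1 h0).resolve_right (sub_ne_zero.2 hzy.symm)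
  rw [hl]
  have : k z / 2 = l := by linarith
  rw [this]

lemma taylor_pos {U V W : ℝ → ℝ} (h1 : ∀ x > 0, HasDerivAt U (V x) x)
    (h2 : ∀ x > 0, HasDerivAt V (W x) x) {x y : ℝ} (hx : 0 < x) (hy : 0 < y) :
    ∃ z ∈ Set.uIcc x y, U y = U x + V x * (y - x) + W z / 2 * (y - x) ^ 2 := by
  have : ∀ t ∈ Set.uIcc x y, 0 < t := fun t ht => (lt_min hx hy).trans_le ht.1
  exact taylor_two (fun t ht => h1 t (this t ht)) (fun t ht => h2 t (this t ht))

lemma le_tangent {U V W : ℝ → ℝ} (h1 : ∀ x > 0, HasDerivAt U (V x) x)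
    (h2 : ∀ x > 0, HasDerivAt V (W x) x) (hW : ∀ x > 0, W x < 0)
    {x y : ℝ} (hx : 0 < x) (hy : 0 < y) : U y ≤ U x + V x * (y - x) := by
  obtain ⟨z, hz, h⟩ := taylor_pos h1 h2 hx hy
  have := hW z ((lt_min hx hy).trans_le hz.1)
  nlinarith [sq_nonneg (y - x)]

lemma taylor_two_isLittleO {U V W : ℝ → ℝ} (h1 : ∀ x > 0, HasDerivAt U (V x) x)
    (h2 : ∀ x > 0, HasDerivAt V (W x) x) {x : ℝ} (hx : 0 < x) (hc : ContinuousAt W x) :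
    (fun h => U (x + h) - U x - V x * h - (1 / 2) * (W x * h ^ 2)) =o[𝓝 0]
      fun h : ℝ => h ^ 2 := by
  rw [isLittleO_iff]
  intro ε hε
  obtain ⟨δ, hδ, hd⟩ := Metric.continuousAt_iff.1 hc ε hε
  have : Metric.ball (0 : ℝ) (min δ x) ∈ 𝓝 (0 : ℝ) := Metric.ball_mem_nhds _ (lt_min hδ hx)
  filter_upwards [this] with h hh
  rw [Metric.mem_ball, dist_zero_right, Real.norm_eq_abs, lt_min_iff] at hh
  obtain ⟨hh1, hh2⟩ := hh
  have hy : 0 < x + h := by linarith [(abs_lt.1 hh2).1]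
  obtain ⟨z, hz, he⟩ := taylor_pos h1 h2 hx hy
  have hz' : |z - x| ≤ |x + h - x| := Set.abs_sub_left_of_mem_uIcc hz
  have hz2 : dist z x < δ := by
    rw [Real.dist_eq]; simp only [add_sub_cancel_left] at hz'; linarith
  have hW := hd hz2
  rw [Real.dist_eq] at hW
  have : U (x + h) - U x - V x * h - (1 / 2) * (W x * h ^ 2) = (W z - W x) * (h ^ 2 / 2) := by
    rw [he]; ring
  rw [this, norm_mul, Real.norm_eq_abs, Real.norm_eq_abs, Real.norm_eq_abs,
    abs_of_nonneg (by positivity : 0 ≤ h ^ 2 / 2), abs_of_nonneg (by positivity : 0 ≤ h ^ 2)]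
  nlinarith [sq_nonneg h]

/-! ### Growth estimates from bounded relative risk aversion -/

/-- Holds because `x ^ c * V x` is nondecreasing. -/
lemma marginal_scale {V W : ℝ → ℝ} {c : ℝ} (h2 : ∀ x > 0, HasDerivAt V (W x) x)
    (hhi : ∀ x > 0, -(x * W x) ≤ c * V x) {t x : ℝ} (ht : 0 < t) (ht1 : t ≤ 1) (hx : 0 < x) :
    V (t * x) ≤ t ^ (-c) * V x := by
  have hd : ∀ y > 0, HasDerivAt (fun y => y ^ c * V y)
      (c * y ^ (c - 1) * V y + y ^ c * W y) y := fun y hy =>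
    (Real.hasDerivAt_rpow_const (Or.inl hy.ne')).mul (h2 y hy)
  have hm : MonotoneOn (fun y => y ^ c * V y) (Set.Ioi 0) := by
    apply monotoneOn_of_deriv_nonneg (convex_Ioi 0)
    · exact fun y hy => (hd y hy).continuousAt.continuousWithinAt
    · rw [interior_Ioi]
      exact fun y hy => (hd y hy).differentiableAt.differentiableWithinAt
    · rw [interior_Ioi]
      intro y hy
      have hy : 0 < y := hy
      rw [(hd y hy).deriv]
      have : y ^ c = y ^ (c - 1) * y := by
        rw [← Real.rpow_add_one hy.ne']; ring_nf
      rw [this]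
      have := hhi y hy
      have h3 : 0 ≤ y ^ (c - 1) := by positivity
      have := mul_nonneg h3 (by linarith : 0 ≤ c * V y + y * W y)
      linarith
  have htx : 0 < t * x := mul_pos ht hx
  have := hm (Set.mem_Ioi.2 htx) (Set.mem_Ioi.2 hx) (by nlinarith)
  simp only at this
  rw [Real.mul_rpow ht.le hx.le] at this
  have hxc : 0 < x ^ c := Real.rpow_pos_of_pos hx c
  have htc : 0 < t ^ c := Real.rpow_pos_of_pos ht c
  have h4 : t ^ c * V (t * x) ≤ V x := by
    refine le_of_mul_le_mul_left ?_ hxc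
    linarith
  rw [Real.rpow_neg ht.le, inv_mul_eq_div, le_div_iff₀ htc]
  linarith

lemma marginal_antitone {V W : ℝ → ℝ} (h2 : ∀ x > 0, HasDerivAt V (W x) x)
    (hW : ∀ x > 0, W x < 0) : AntitoneOn V (Set.Ioi 0) := by
  apply antitoneOn_of_deriv_nonpos (convex_Ioi 0)
  · exact fun y hy => (h2 y hy).continuousAt.continuousWithinAt
  · rw [interior_Ioi]
    exact fun y hy => (h2 y hy).differentiableAt.differentiableWithinAt
  · rw [interior_Ioi]
    intro y hy
    rw [(h2 y hy).deriv]
    exact (hW y hy).le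

/-- For `x ≥ 2` the tangent at `x` is compared with the value at `1`; for `x < 2` the tangent at
`2 * x` is compared with the value at `x`, and `V x ≤ 2 ^ c * V (2 * x)`. -/
lemma mul_marginal_le {U V W : ℝ → ℝ} {c : ℝ} (h1 : ∀ x > 0, HasDerivAt U (V x) x)
    (h2 : ∀ x > 0, HasDerivAt V (W x) x) (hV : ∀ x > 0, 0 < V x) (hW : ∀ x > 0, W x < 0)
    (hmono : StrictMonoOn U (Set.Ioi 0))
    (hhi : ∀ x > 0, -(x * W x) ≤ c * V x) :
    ∃ C, 0 ≤ C ∧ ∀ x > 0, x * V x ≤ C * (1 + |U x|) := by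
  set D : ℝ := (1 / 2 : ℝ) ^ (-c) with hD
  have hD0 : 0 ≤ D := by positivity
  refine ⟨2 * (1 + |U 1|) + D * (1 + |U 4|), by positivity, fun x hx => ?_⟩
  have hVx := hV x hx
  have hUx := abs_nonneg (U x)
  rcases le_or_gt 2 x with h | h
  · have ht := le_tangent h1 h2 hW hx one_pos
    have h3 : x * V x ≤ 2 * (|U 1| + |U x|) := by
      nlinarith [neg_abs_le (U 1), le_abs_self (U x)]
    have h4 : 0 ≤ D * (1 + |U 4|) * (1 + |U x|) := by positivity
    nlinarith [abs_nonneg (U 1), mul_nonneg (abs_nonneg (U 1)) hUx]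
  · have ht := le_tangent h1 h2 hW (by positivity : 0 < 2 * x) hx
    have hs := marginal_scale h2 hhi (by norm_num : (0 : ℝ) < 1 / 2) (by norm_num)
      (by positivity : 0 < 2 * x)
    rw [← hD, show 1 / 2 * (2 * x) = x by ring] at hs
    have hm : U (2 * x) ≤ U 4 := (hmono.monotoneOn) (Set.mem_Ioi.2 (by positivity))
      (Set.mem_Ioi.2 (by norm_num)) (by linarith)
    have h3 : x * V (2 * x) ≤ |U 4| + |U x| := by
      nlinarith [le_abs_self (U 4), neg_abs_le (U x)]
    have h4 : x * V x ≤ D * (|U 4| + |U x|) := by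
      calc x * V x ≤ x * (D * V (2 * x)) := by gcongr
        _ = D * (x * V (2 * x)) := by ring
        _ ≤ _ := by gcongr
    have h5 : 0 ≤ 2 * (1 + |U 1|) * (1 + |U x|) := by positivity
    have h6 : |U 4| + |U x| ≤ (1 + |U 4|) * (1 + |U x|) := by
      nlinarith [mul_nonneg (abs_nonneg (U 4)) hUx]
    have := mul_le_mul_of_nonneg_left h6 hD0
    linarith

/-- Makes `U'(ξ) ‖η‖` integrable: AM-GM followed by `V x ≤ c⁻¹ * (-(x * W x))`. -/
lemma marginal_mul_le {V W : ℝ → ℝ} {c : ℝ} (hc : 0 < c)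
    (hlo : ∀ x > 0, c * V x ≤ -(x * W x)) (hV : ∀ x > 0, 0 < V x)
    {x : ℝ} (hx : 0 < x) (r : ℝ) :
    V x * r ≤ x * V x + c⁻¹ * (-W x * r ^ 2) := by
  have h := hlo x hx
  have hVx := hV x hx
  have h3 : V x ≤ x * (c⁻¹ * -W x) := by
    have := mul_le_mul_of_nonneg_left h (inv_nonneg.2 hc.le)
    rw [inv_mul_cancel_left₀ hc.ne'] at this
    linarith
  have h4 : V x * r ^ 2 ≤ x * (c⁻¹ * -W x) * r ^ 2 := by gcongr
  have h5 : x * (V x * r) ≤ x * (x * V x + c⁻¹ * (-W x * r ^ 2)) := by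
    -- AM-GM: `x * r ≤ x ^ 2 + r ^ 2`, multiplied by `V x`
    have : V x * (x * r) ≤ V x * (x ^ 2 + r ^ 2) := by
      gcongr; nlinarith [sq_nonneg (x - r), sq_nonneg x, sq_nonneg r]
    nlinarith
  exact le_of_mul_le_mul_left h5 hx

/-- For `z ≥ x / 2` the chain is
`x |W z| / 2 ≤ z |W z| ≤ c₂ V z ≤ c₂ V (x / 2) ≤ c₂ 2 ^ c₂ V x ≤ (c₂ 2 ^ c₂ / c₁) x |W x|`. -/
lemma abs_second_le {V W : ℝ → ℝ} {c₁ c₂ : ℝ} (hc₁ : 0 < c₁) (hc₂ : 0 < c₂)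
    (h2 : ∀ x > 0, HasDerivAt V (W x) x) (hW : ∀ x > 0, W x < 0)
    (hlo : ∀ x > 0, c₁ * V x ≤ -(x * W x)) (hhi : ∀ x > 0, -(x * W x) ≤ c₂ * V x) :
    ∃ C, 0 ≤ C ∧ ∀ x > 0, ∀ z, x / 2 ≤ z → |W z| ≤ C * -W x := by
  set D : ℝ := (1 / 2 : ℝ) ^ (-c₂) with hD
  have hD0 : 0 ≤ D := by positivity
  refine ⟨2 * (c₂ * D * c₁⁻¹), by positivity, fun x hx z hz => ?_⟩
  have hx2 : 0 < x / 2 := by positivity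
  have hz0 : 0 < z := by linarith
  rw [abs_of_neg (hW z hz0)]
  have hs := marginal_scale h2 hhi (by norm_num : (0 : ℝ) < 1 / 2) (by norm_num) hx
  rw [← hD, show 1 / 2 * x = x / 2 by ring] at hs
  have ha := marginal_antitone h2 hW (Set.mem_Ioi.2 hx2) (Set.mem_Ioi.2 hz0) hz
  have h3 : V x ≤ c₁⁻¹ * (x * -W x) := by
    have := mul_le_mul_of_nonneg_left (hlo x hx) (inv_nonneg.2 hc₁.le)
    rw [inv_mul_cancel_left₀ hc₁.ne'] at this
    linarith
  have h4 : x / 2 * -W z ≤ x / 2 * (2 * (c₂ * D * c₁⁻¹) * -W x) := by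
    calc x / 2 * -W z ≤ z * -W z := by
          have := hW z hz0
          nlinarith
      _ = -(z * W z) := by ring
      _ ≤ c₂ * V z := hhi z hz0
      _ ≤ c₂ * (D * (c₁⁻¹ * (x * -W x))) := by
          have : V z ≤ D * V x := ha.trans hs
          gcongr
          exact this.trans (by gcongr)
      _ = _ := by ring
  exact le_of_mul_le_mul_left h4 hx2

/-- Dropping below `x` by at most a factor `1 - θ` costs at most a multiple of `x * V x`. -/
lemma abs_utility_le {U V W : ℝ → ℝ} {c : ℝ} (h1 : ∀ x > 0, HasDerivAt U (V x) x)
    (h2 : ∀ x > 0, HasDerivAt V (W x) x) (hV : ∀ x > 0, 0 < V x) (hW : ∀ x > 0, W x < 0)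
    (hmono : StrictMonoOn U (Set.Ioi 0)) (hhi : ∀ x > 0, -(x * W x) ≤ c * V x)
    {θ x h : ℝ} (hθ0 : 0 ≤ θ) (hθ : θ < 1) (hx : 0 < x) (hh : (1 - θ) * x ≤ x + h) :
    |U (x + h)| ≤ |U x| + V x * |h| + (1 - θ) ^ (-c) * (x * V x) := by
  have hs := marginal_scale h2 hhi (by linarith : 0 < 1 - θ) (by linarith) hx
  have hp : 0 < (1 - θ) * x := mul_pos (by linarith) hx
  have hup := le_tangent h1 h2 hW hx (hp.trans_le hh)
  have hlow := le_tangent h1 h2 hW hp hx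
  have hm := hmono.monotoneOn (Set.mem_Ioi.2 hp) (Set.mem_Ioi.2 (hp.trans_le hh)) hh
  have hVx := hV x hx
  have hq : 0 ≤ (1 - θ) ^ (-c) * (x * V x) :=
    mul_nonneg (Real.rpow_nonneg (by linarith) _) (by positivity)
  have hVh : V x * h ≤ V x * |h| := mul_le_mul_of_nonneg_left (le_abs_self h) hVx.le
  have hVh' : 0 ≤ V x * |h| := by positivity
  rw [abs_le]
  constructor
  · have e : V ((1 - θ) * x) * (x - (1 - θ) * x) ≤ (1 - θ) ^ (-c) * (x * V x) := by
      calc V ((1 - θ) * x) * (x - (1 - θ) * x) = V ((1 - θ) * x) * x * θ := by ring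
        _ ≤ V ((1 - θ) * x) * x * 1 := by
            have := hV _ hp
            gcongr
        _ ≤ ((1 - θ) ^ (-c) * V x) * x * 1 := by gcongr
        _ = _ := by ring
    linarith [neg_abs_le (U x)]
  · rw [add_sub_cancel_left] at hup
    linarith [le_abs_self (U x)]

/-! ### Measurability and linear algebra -/

/-- `U` is only controlled on `(0, ∞)`, so measurability passes through its extension by zero. -/
lemma aestronglyMeasurable_comp_pos {Ω : Type*} [MeasurableSpace Ω] {μ : Measure Ω} {U : ℝ → ℝ}
    (hU : ContinuousOn U (Set.Ioi 0)) {Y : Ω → ℝ} (hY : Measurable Y)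
    (hpos : ∀ᵐ ω ∂μ, 0 < Y ω) : AEStronglyMeasurable (fun ω => U (Y ω)) μ := by
  classical
  have hm : Measurable ((Set.Ioi (0 : ℝ)).piecewise U (fun _ => 0)) :=
    hU.measurable_piecewise continuousOn_const measurableSet_Ioi
  refine (hm.comp hY).aestronglyMeasurable.congr ?_
  filter_upwards [hpos] with ω h
  simp [Set.piecewise, h]

lemma abs_sum_mul_le {n : ℕ} (s v : EuclideanSpace ℝ (Fin n)) :
    |∑ i, s i * v i| ≤ ‖s‖ * ‖v‖ := by
  have := abs_real_inner_le_norm s v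
  simpa [PiLp.inner_apply, mul_comm] using this

lemma scale_le_add_sum {n : ℕ} {s v : EuclideanSpace ℝ (Fin n)} {K x : ℝ}
    (hs : ∀ i, 0 ≤ s i) (hv : ∀ i, -K * x ≤ v i) :
    (1 - K * ∑ i, s i) * x ≤ x + ∑ i, s i * v i := by
  have : ∑ i, s i * (-K * x) ≤ ∑ i, s i * v i :=
    Finset.sum_le_sum fun i _ => mul_le_mul_of_nonneg_left (hv i) (hs i)
  rw [← Finset.sum_mul] at this
  linarith

lemma mul_sum_lt_one {m : ℕ} {s : EuclideanSpace ℝ (Fin (m + 1))} {K : ℝ} (hK : 0 < K)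
    (hs : ∀ i, 0 ≤ s i ∧ s i < 1 / (K * (m + 1))) : K * ∑ i, s i < 1 := by
  have h : ∑ i, s i < ∑ _i : Fin (m + 1), 1 / (K * (m + 1)) :=
    Finset.sum_lt_sum_of_nonempty Finset.univ_nonempty fun i _ => (hs i).2
  have e : ∑ _i : Fin (m + 1), 1 / (K * ((m : ℝ) + 1)) = 1 / K := by
    simp only [Finset.sum_const, Finset.card_univ, Fintype.card_fin, nsmul_eq_mul]
    push_cast
    field_simp
  rw [e, lt_div_iff₀ hK] at h
  linarith

/-! ### The expansion of expected utility -/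

/-- Lemma 1 of Kramkov–Sîrbu: second-order expansion of `w(s) = E[U(ξ + ⟨s, η⟩)]`
for a utility function `U` with relative risk aversion bounded away from zero and
infinity. -/
theorem second_order_expansion_of_expected_utility
    {Ω : Type*} [MeasureSpace Ω] [IsProbabilityMeasure (volume : Measure Ω)]
    (m : ℕ) (U : ℝ → ℝ) (c₁ c₂ : ℝ) (hc₁ : 0 < c₁) (hc₁₂ : c₁ < c₂)
    (hU_mono : StrictMonoOn U (Set.Ioi 0))
    (hU_conc : StrictConcaveOn ℝ (Set.Ioi 0) U)
    (hU_smooth : ContDiffOn ℝ 2 U (Set.Ioi 0))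
    (hA : ∀ x > (0 : ℝ),
      c₁ < -(x * deriv (deriv U) x) / deriv U x ∧
        -(x * deriv (deriv U) x) / deriv U x < c₂)
    (ξ : Ω → ℝ) (hξ_meas : Measurable ξ) (hξ_pos : ∀ᵐ ω, 0 < ξ ω)
    (hUξ_int : Integrable fun ω => U (ξ ω))
    (η : Ω → EuclideanSpace ℝ (Fin (m + 1))) (hη_meas : Measurable η)
    (K : ℝ) (hK : 0 < K)
    (hη_bdd : ∀ᵐ ω, ∀ i, -K * ξ ω ≤ η ω i)
    (hη_int : Integrable fun ω => -deriv (deriv U) (ξ ω) * ‖η ω‖ ^ 2) :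
    (∀ s : EuclideanSpace ℝ (Fin (m + 1)),
        (∀ i, 0 ≤ s i ∧ s i < 1 / (K * (m + 1))) →
        Integrable fun ω => U (ξ ω + ∑ i, s i * η ω i)) ∧
    (fun s : EuclideanSpace ℝ (Fin (m + 1)) =>
        (∫ ω, U (ξ ω + ∑ i, s i * η ω i)) - (∫ ω, U (ξ ω))
          - (∫ ω, deriv U (ξ ω) * ∑ i, s i * η ω i)
          - (1 / 2) * ∫ ω, deriv (deriv U) (ξ ω) * (∑ i, s i * η ω i) ^ 2)
      =o[𝓝[{s : EuclideanSpace ℝ (Fin (m + 1)) |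
            ∀ i, 0 ≤ s i ∧ s i < 1 / (K * (m + 1))}] 0]
      (fun s => ‖s‖ ^ 2) := by
  set V := deriv U with hVdef
  set W := deriv V with hWdef
  have hVC : ContDiffOn ℝ 1 V (Set.Ioi 0) :=
    hU_smooth.deriv_of_isOpen isOpen_Ioi (by norm_num)
  have hWC : ContinuousOn W (Set.Ioi 0) :=
    hVC.continuousOn_deriv_of_isOpen isOpen_Ioi le_rfl
  have h1 : ∀ x > 0, HasDerivAt U (V x) x := fun x hx =>
    ((hU_smooth.differentiableOn (by norm_num)).differentiableAt
      (isOpen_Ioi.mem_nhds hx)).hasDerivAt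
  have h2 : ∀ x > 0, HasDerivAt V (W x) x := fun x hx =>
    ((hVC.differentiableOn (by norm_num)).differentiableAt
      (isOpen_Ioi.mem_nhds hx)).hasDerivAt
  have hV : ∀ x > 0, 0 < V x := by
    intro x hx
    have h0 : 0 ≤ V x := by
      have hw : derivWithin U (Set.Ioi 0) x = V x := derivWithin_of_isOpen isOpen_Ioi hx
      rw [← hw]
      exact hU_mono.monotoneOn.derivWithin_nonneg
    refine lt_of_le_of_ne h0 fun h => ?_
    -- if `V x = 0`, the quotient in `hA` is `0` by convention, contradicting `0 < c₁`
    have := (hA x hx).1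
    rw [← h, div_zero] at this
    linarith
  have hlo : ∀ x > 0, c₁ * V x ≤ -(x * W x) := fun x hx =>
    ((lt_div_iff₀ (hV x hx)).1 (hA x hx).1).le
  have hhi : ∀ x > 0, -(x * W x) ≤ c₂ * V x := fun x hx =>
    ((div_lt_iff₀ (hV x hx)).1 (hA x hx).2).le
  have hW : ∀ x > 0, W x < 0 := by
    intro x hx
    have : 0 < x * -W x := by
      have := mul_pos hc₁ (hV x hx)
      linarith [hlo x hx]
    have := pos_of_mul_pos_right this hx.le
    linarith
  have hVm : Measurable V := measurable_deriv U
  have hWm : Measurable W := measurable_deriv V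
  have hηi : ∀ i, Measurable fun ω => η ω i := fun i => by fun_prop
  have hLm : ∀ s : EuclideanSpace ℝ (Fin (m + 1)), Measurable fun ω => ∑ i, s i * η ω i :=
    fun s => Finset.measurable_sum _ fun i _ => (hηi i).const_mul _
  have hξV : Integrable fun ω => ξ ω * V (ξ ω) := by
    obtain ⟨C, -, hC⟩ := mul_marginal_le h1 h2 hV hW hU_mono hhi
    refine (((integrable_const (1 : ℝ)).add hUξ_int.abs).const_mul C).mono'
      (hξ_meas.mul (hVm.comp hξ_meas)).aestronglyMeasurable ?_
    filter_upwards [hξ_pos] with ω hω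
    rw [Real.norm_eq_abs, abs_of_pos (mul_pos hω (hV _ hω))]
    exact hC _ hω
  have hVη : Integrable fun ω => V (ξ ω) * ‖η ω‖ := by
    refine (hξV.add (hη_int.const_mul c₁⁻¹)).mono'
      ((hVm.comp hξ_meas).mul hη_meas.norm).aestronglyMeasurable ?_
    filter_upwards [hξ_pos] with ω hω
    rw [Real.norm_eq_abs, abs_of_nonneg (mul_nonneg (hV _ hω).le (norm_nonneg _))]
    exact marginal_mul_le hc₁ hlo hV hω _
  have hVL : ∀ s : EuclideanSpace ℝ (Fin (m + 1)),
      Integrable fun ω => V (ξ ω) * ∑ i, s i * η ω i := by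
    intro s
    refine (hVη.const_mul ‖s‖).mono'
      ((hVm.comp hξ_meas).mul (hLm s)).aestronglyMeasurable ?_
    filter_upwards [hξ_pos] with ω hω
    rw [norm_mul, Real.norm_eq_abs, Real.norm_eq_abs, abs_of_pos (hV _ hω)]
    have := mul_le_mul_of_nonneg_left (abs_sum_mul_le s (η ω)) (hV _ hω).le
    linarith
  have hWL : ∀ s : EuclideanSpace ℝ (Fin (m + 1)),
      Integrable fun ω => W (ξ ω) * (∑ i, s i * η ω i) ^ 2 := by
    intro s
    refine (hη_int.const_mul (‖s‖ ^ 2)).mono'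
      ((hWm.comp hξ_meas).mul ((hLm s).pow_const 2)).aestronglyMeasurable ?_
    filter_upwards [hξ_pos] with ω hω
    rw [norm_mul, Real.norm_eq_abs, Real.norm_eq_abs, abs_of_neg (hW _ hω), abs_pow]
    have := pow_le_pow_left₀ (abs_nonneg _) (abs_sum_mul_le s (η ω)) 2
    have := mul_le_mul_of_nonneg_left this (neg_nonneg.2 (hW _ hω).le)
    rw [mul_pow] at this
    linarith
  have hmeasU : ∀ s : EuclideanSpace ℝ (Fin (m + 1)),
      (∀ i, 0 ≤ s i ∧ s i < 1 / (K * (m + 1))) →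
      AEStronglyMeasurable (fun ω => U (ξ ω + ∑ i, s i * η ω i)) volume := by
    intro s hs
    refine aestronglyMeasurable_comp_pos hU_smooth.continuousOn (hξ_meas.add (hLm s)) ?_
    filter_upwards [hξ_pos, hη_bdd] with ω hω hb
    have := mul_pos (sub_pos.2 (mul_sum_lt_one hK hs)) hω
    exact this.trans_le (scale_le_add_sum (fun i => (hs i).1) hb)
  have hUL : ∀ s : EuclideanSpace ℝ (Fin (m + 1)),
      (∀ i, 0 ≤ s i ∧ s i < 1 / (K * (m + 1))) →
      Integrable fun ω => U (ξ ω + ∑ i, s i * η ω i) := by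
    intro s hs
    set θ := K * ∑ i, s i with hθ
    have hθ0 : 0 ≤ θ := mul_nonneg hK.le (Finset.sum_nonneg fun i _ => (hs i).1)
    have hθ1 : θ < 1 := mul_sum_lt_one hK hs
    refine ((hUξ_int.abs.add (hVη.const_mul ‖s‖)).add
      (hξV.const_mul ((1 - θ) ^ (-c₂)))).mono' (hmeasU s hs) ?_
    filter_upwards [hξ_pos, hη_bdd] with ω hω hb
    have hb' := scale_le_add_sum (fun i => (hs i).1) hb
    have h3 := abs_utility_le h1 h2 hV hW hU_mono hhi hθ0 hθ1 hω hb'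
    have h4 := mul_le_mul_of_nonneg_left (abs_sum_mul_le s (η ω)) (hV _ hω).le
    rw [Real.norm_eq_abs]
    simp only [Pi.add_apply]
    linarith
  refine ⟨hUL, ?_⟩
  set S := {s : EuclideanSpace ℝ (Fin (m + 1)) | ∀ i, 0 ≤ s i ∧ s i < 1 / (K * (m + 1))} with hS
  let R : EuclideanSpace ℝ (Fin (m + 1)) → Ω → ℝ := fun s ω =>
    U (ξ ω + ∑ i, s i * η ω i) - U (ξ ω) - V (ξ ω) * (∑ i, s i * η ω i)
      - (1 / 2) * (W (ξ ω) * (∑ i, s i * η ω i) ^ 2)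
  have hmem : ∀ᶠ s in 𝓝[S] (0 : EuclideanSpace ℝ (Fin (m + 1))), s ∈ S := self_mem_nhdsWithin
  have hsmall : ∀ᶠ s in 𝓝[S] (0 : EuclideanSpace ℝ (Fin (m + 1))), K * ∑ i, s i < 1 / 2 := by
    apply eventually_nhdsWithin_of_eventually_nhds
    have hc : Continuous fun s : EuclideanSpace ℝ (Fin (m + 1)) => K * ∑ i, s i := by fun_prop
    exact hc.continuousAt.eventually_lt continuousAt_const (by simp)
  obtain ⟨C, hC0, hC⟩ := abs_second_le hc₁ (hc₁.trans hc₁₂) h2 hW hlo hhi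
  have hlim : Tendsto (fun s => ∫ ω, R s ω / ‖s‖ ^ 2) (𝓝[S] 0) (𝓝 (∫ _ω : Ω, (0 : ℝ))) := by
    refine tendsto_integral_filter_of_dominated_convergence
      (fun ω => (C + 1) * (-W (ξ ω) * ‖η ω‖ ^ 2)) ?_ ?_ (hη_int.const_mul _) ?_
    · filter_upwards [hmem] with s hs
      exact (((((hUL s hs).sub hUξ_int).sub (hVL s)).sub
        ((hWL s).const_mul (1 / 2))).div_const _).aestronglyMeasurable
    · filter_upwards [hmem, hsmall] with s hs hs2
      filter_upwards [hξ_pos, hη_bdd] with ω hω hb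
      have hb' := scale_le_add_sum (fun i => (hs i).1) hb
      have hhalf : ξ ω / 2 ≤ ξ ω + ∑ i, s i * η ω i := by nlinarith
      obtain ⟨z, hz, he⟩ := taylor_pos h1 h2 hω (by linarith : 0 < ξ ω + ∑ i, s i * η ω i)
      have hz2 : ξ ω / 2 ≤ z := (le_min (by linarith) hhalf).trans hz.1
      have hWz := hC _ hω z hz2
      have hWx := hW _ hω
      have hR : R s ω = (W z - W (ξ ω)) / 2 * (∑ i, s i * η ω i) ^ 2 := by
        simp only [R]; rw [he]; ring
      have hL := pow_le_pow_left₀ (abs_nonneg _) (abs_sum_mul_le s (η ω)) 2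
      rw [sq_abs] at hL
      have hWd : |(W z - W (ξ ω)) / 2| ≤ (C + 1) * -W (ξ ω) := by
        have h5 := abs_le.1 hWz
        have : 0 ≤ C * -W (ξ ω) := mul_nonneg hC0 (by linarith)
        rw [abs_le]
        constructor <;> linarith [h5.1, h5.2]
      have hRle : |R s ω| ≤ (C + 1) * (-W (ξ ω) * ‖η ω‖ ^ 2) * ‖s‖ ^ 2 := by
        rw [hR, abs_mul, abs_of_nonneg (sq_nonneg (∑ i, s i * η ω i))]
        calc _ ≤ ((C + 1) * -W (ξ ω)) * (‖s‖ * ‖η ω‖) ^ 2 :=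
              mul_le_mul hWd hL (sq_nonneg _) ((abs_nonneg _).trans hWd)
          _ = _ := by ring
      rw [norm_div, Real.norm_eq_abs, Real.norm_eq_abs, abs_of_nonneg (sq_nonneg ‖s‖)]
      refine div_le_of_le_mul₀ (sq_nonneg _) ?_ hRle
      have := neg_nonneg.2 hWx.le
      positivity
    · filter_upwards [hξ_pos] with ω hω
      have ho := taylor_two_isLittleO h1 h2 hω (hWC.continuousAt (isOpen_Ioi.mem_nhds hω))
      have hc : Continuous fun s : EuclideanSpace ℝ (Fin (m + 1)) => ∑ i, s i * η ω i := by
        fun_prop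
      have ht : Tendsto (fun s : EuclideanSpace ℝ (Fin (m + 1)) => ∑ i, s i * η ω i)
          (𝓝[S] 0) (𝓝 0) := by
        have := hc.tendsto 0
        simp only [PiLp.zero_apply, zero_mul, Finset.sum_const_zero] at this
        exact this.mono_left nhdsWithin_le_nhds
      have hO : (fun s : EuclideanSpace ℝ (Fin (m + 1)) => (∑ i, s i * η ω i) ^ 2)
          =O[𝓝[S] 0] fun s => ‖s‖ ^ 2 := by
        refine IsBigO.of_bound (‖η ω‖ ^ 2) (Eventually.of_forall fun s => ?_)
        have hL := pow_le_pow_left₀ (abs_nonneg _) (abs_sum_mul_le s (η ω)) 2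
        rw [norm_pow, norm_pow, norm_norm, Real.norm_eq_abs]
        linarith [mul_pow ‖s‖ ‖η ω‖ 2]
      exact ((ho.comp_tendsto ht).trans_isBigO hO).tendsto_div_nhds_zero
  have hRint : ∀ s ∈ S, ∫ ω, R s ω =
      (∫ ω, U (ξ ω + ∑ i, s i * η ω i)) - (∫ ω, U (ξ ω))
          - (∫ ω, V (ξ ω) * ∑ i, s i * η ω i)
          - (1 / 2) * ∫ ω, W (ξ ω) * (∑ i, s i * η ω i) ^ 2 := by
    intro s hs
    simp only [R]
    have i1 : Integrable fun ω => U (ξ ω + ∑ i, s i * η ω i) - U (ξ ω) := (hUL s hs).sub hUξ_int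
    have i2 : Integrable fun ω => U (ξ ω + ∑ i, s i * η ω i) - U (ξ ω)
        - V (ξ ω) * ∑ i, s i * η ω i := i1.sub (hVL s)
    rw [integral_sub i2 ((hWL s).const_mul (1 / 2)), integral_sub i1 (hVL s),
      integral_sub (hUL s hs) hUξ_int, integral_const_mul]
  have hlo' : (fun s => ∫ ω, R s ω) =o[𝓝[S] 0]
      (fun s : EuclideanSpace ℝ (Fin (m + 1)) => ‖s‖ ^ 2) := by
    rw [isLittleO_iff_tendsto]
    · simpa [integral_div] using hlim
    -- at `s = 0`, where the quotient is `0 / 0`, the remainder vanishes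
    · intro s hs
      have hs : s = 0 := by simpa using hs
      simp [R, hs]
  exact hlo'.congr' (hmem.mono fun s hs => hRint s hs) EventuallyEq.rfl
end

section
/- Let (Ω, ℱ, P) be a probability space and U : (0,∞) → ℝ a strictly increasing, strictly concave, twice continuously differentiable function whose relative risk-aversion coefficient A(x) = -x·U''(x)/U'(x) satisfies c₁ < A(x) < c₂ for all x > 0, for some constants 0 < c₁ < c₂ < ∞. Let ξ > 0 be a random variable with E[|U(ξ)|] < ∞, and let η be an (m+1)-dimensional random vector with E[-U''(ξ)·‖η‖²] < ∞. Then E[U'(ξ)·‖η‖] < ∞. -/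
/-!
Strict monotonicity and the bounds on the risk aversion `A` force `U' > 0` and
`c₁ U' < -x U'' < c₂ U'` on `(0, ∞)`.

Splitting according to whether `c₁ ‖η‖ ≤ ξ` or not gives the pointwise bound
`U'(ξ) ‖η‖ ≤ c₁⁻¹ ξ U'(ξ) - U''(ξ) ‖η‖²`, so it remains to dominate `x U'(x)` by an affine
function of `|U(x)|`. Since `(x U')' = U' (1 - A)`, the function `x U' - U` is decreasing and
`x U' + c₂ U` is increasing; comparing with the values at `1` bounds `x U'(x)` for `x ≥ 1` and
`x ≤ 1` respectively.
-/

open MeasureTheory ProbabilityTheory Filter Topology Asymptotics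

/-- If `U' > 0`, `U'' ≤ 0` and `-x U'' ≤ c₂ U'`, then `x U'` grows at most like `|U|`, both at `0`
and at infinity: `x U' - U` is antitone and `x U' + c₂ U` is monotone. -/
lemma exists_mul_deriv_le {U : ℝ → ℝ} {c₂ : ℝ} (hc₂ : 0 ≤ c₂)
    (hU_smooth : ContDiffOn ℝ 2 U (Set.Ioi 0))
    (hpos : ∀ x > (0 : ℝ), 0 < deriv U x)
    (hneg : ∀ x > (0 : ℝ), deriv (deriv U) x ≤ 0)
    (hub : ∀ x > (0 : ℝ), -(x * deriv (deriv U) x) ≤ c₂ * deriv U x) :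
    ∃ C, ∀ x > (0 : ℝ), x * deriv U x ≤ C + (1 + c₂) * |U x| := by
  have hd1 : ∀ x > (0 : ℝ), HasDerivAt U (deriv U x) x := fun x hx =>
    ((hU_smooth.differentiableOn (by norm_num)).differentiableAt
      (Ioi_mem_nhds hx)).hasDerivAt
  have hC1 : ContDiffOn ℝ 1 (deriv U) (Set.Ioi 0) :=
    hU_smooth.deriv_of_isOpen isOpen_Ioi (by norm_num)
  have hd2 : ∀ x > (0 : ℝ), HasDerivAt (deriv U) (deriv (deriv U) x) x := fun x hx =>
    ((hC1.differentiableOn (by norm_num)).differentiableAt (Ioi_mem_nhds hx)).hasDerivAt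
  have hder : ∀ k : ℝ, ∀ x > (0 : ℝ), HasDerivAt (fun y => y * deriv U y + k * U y)
      (1 * deriv U x + x * deriv (deriv U) x + k * deriv U x) x := fun k x hx =>
    ((hasDerivAt_id x).mul (hd2 x hx)).add ((hd1 x hx).const_mul k)
  have hanti : AntitoneOn (fun y => y * deriv U y + (-1) * U y) (Set.Ioi 0) := by
    refine antitoneOn_of_deriv_nonpos (convex_Ioi 0)
      (fun x hx => (hder _ x hx).continuousAt.continuousWithinAt) ?_ ?_
    · rw [interior_Ioi]
      exact fun x hx => (hder _ x hx).differentiableAt.differentiableWithinAt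
    · rw [interior_Ioi]
      intro x hx
      rw [(hder _ x hx).deriv]
      have := mul_nonpos_of_nonneg_of_nonpos (le_of_lt hx) (hneg x hx)
      linarith
  have hmono : MonotoneOn (fun y => y * deriv U y + c₂ * U y) (Set.Ioi 0) := by
    refine monotoneOn_of_deriv_nonneg (convex_Ioi 0)
      (fun x hx => (hder _ x hx).continuousAt.continuousWithinAt) ?_ ?_
    · rw [interior_Ioi]
      exact fun x hx => (hder _ x hx).differentiableAt.differentiableWithinAt
    · rw [interior_Ioi]
      intro x hx
      rw [(hder _ x hx).deriv]
      have := hub x hx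
      have := hpos x hx
      linarith
  have h1 : (1 : ℝ) ∈ Set.Ioi (0 : ℝ) := Set.mem_Ioi.2 one_pos
  refine ⟨deriv U 1 + (1 + c₂) * |U 1|, fun x hx => ?_⟩
  have e1 : c₂ * U 1 ≤ c₂ * |U 1| := mul_le_mul_of_nonneg_left (le_abs_self _) hc₂
  have e2 : -(c₂ * U x) ≤ c₂ * |U x| := by
    have := mul_le_mul_of_nonneg_left (neg_le_abs (U x)) hc₂
    linarith
  have e3 : 0 ≤ c₂ * |U 1| := by positivity
  have e4 : 0 ≤ c₂ * |U x| := by positivity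
  have e5 := neg_le_abs (U 1)
  have e6 := le_abs_self (U x)
  have e7 := abs_nonneg (U 1)
  have e8 := abs_nonneg (U x)
  rcases le_total 1 x with h | h
  · have := hanti h1 hx h
    simp only at this
    linarith
  · have := hmono hx h1 h
    simp only at this
    linarith

/-- Equation (63) in the proof of Lemma 1 of Kramkov–Sîrbu: if `U` has relative
risk aversion uniformly bounded away from zero and infinity, `E[|U(ξ)|] < ∞` and
`E[-U''(ξ)‖η‖²] < ∞`, then `E[U'(ξ)‖η‖] < ∞`. -/
theorem integrability_of_marginal_utility_times_norm
    {Ω : Type*} [MeasureSpace Ω] [IsProbabilityMeasure (volume : Measure Ω)]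
    (m : ℕ) (U : ℝ → ℝ) (c₁ c₂ : ℝ) (hc₁ : 0 < c₁) (hc₁₂ : c₁ < c₂)
    (hU_mono : StrictMonoOn U (Set.Ioi 0))
    (hU_conc : StrictConcaveOn ℝ (Set.Ioi 0) U)
    (hU_smooth : ContDiffOn ℝ 2 U (Set.Ioi 0))
    (hA : ∀ x > (0 : ℝ),
      c₁ < -(x * deriv (deriv U) x) / deriv U x ∧
        -(x * deriv (deriv U) x) / deriv U x < c₂)
    (ξ : Ω → ℝ) (hξ_meas : Measurable ξ) (hξ_pos : ∀ᵐ ω, 0 < ξ ω)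
    (hUξ_int : Integrable fun ω => U (ξ ω))
    (η : Ω → EuclideanSpace ℝ (Fin (m + 1))) (hη_meas : Measurable η)
    (hη_int : Integrable fun ω => -deriv (deriv U) (ξ ω) * ‖η ω‖ ^ 2) :
    Integrable fun ω => deriv U (ξ ω) * ‖η ω‖ := by
  have hpos : ∀ x > (0 : ℝ), 0 < deriv U x := by
    intro x hx
    have h0 : 0 ≤ deriv U x := by
      rw [← derivWithin_of_isOpen isOpen_Ioi (Set.mem_Ioi.2 hx)]
      exact hU_mono.monotoneOn.derivWithin_nonneg
    refine lt_of_le_of_ne h0 fun h => ?_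
    -- If `U' x = 0`, the quotient in `hA` is the junk value `0`, below `c₁`.
    have := (hA x hx).1
    rw [← h, div_zero] at this
    linarith
  have hlb : ∀ x > (0 : ℝ), c₁ * deriv U x < -(x * deriv (deriv U) x) := fun x hx =>
    (lt_div_iff₀ (hpos x hx)).1 (hA x hx).1
  have hub : ∀ x > (0 : ℝ), -(x * deriv (deriv U) x) ≤ c₂ * deriv U x := fun x hx =>
    ((div_lt_iff₀ (hpos x hx)).1 (hA x hx).2).le
  have hneg : ∀ x > (0 : ℝ), deriv (deriv U) x ≤ 0 := by
    intro x hx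
    by_contra! h
    have h1 := hlb x hx
    have h2 := mul_pos hc₁ (hpos x hx)
    have h3 := mul_pos hx h
    linarith
  obtain ⟨C, hC⟩ := exists_mul_deriv_le (hc₁.trans hc₁₂).le hU_smooth hpos hneg hub
  have hdom : Integrable fun ω => c₁⁻¹ * (C + (1 + c₂) * |U (ξ ω)|) +
      -deriv (deriv U) (ξ ω) * ‖η ω‖ ^ 2 :=
    (((integrable_const C).add (hUξ_int.abs.const_mul (1 + c₂))).const_mul c₁⁻¹).add hη_int
  refine hdom.mono'
    (((measurable_deriv U).comp hξ_meas).mul hη_meas.norm).aestronglyMeasurable ?_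
  filter_upwards [hξ_pos] with ω hω
  have hn := norm_nonneg (η ω)
  have hp := hpos _ hω
  have hq := hneg _ hω
  rw [Real.norm_of_nonneg (mul_nonneg hp.le hn)]
  have hK : c₁⁻¹ * (ξ ω * deriv U (ξ ω)) ≤ c₁⁻¹ * (C + (1 + c₂) * |U (ξ ω)|) :=
    mul_le_mul_of_nonneg_left (hC _ hω) (inv_nonneg.2 hc₁.le)
  refine le_trans ?_ (add_le_add_left hK _)
  rcases le_total (c₁ * ‖η ω‖) (ξ ω) with h | h
  · have h1 : ‖η ω‖ ≤ c₁⁻¹ * ξ ω := by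
      rw [inv_mul_eq_div, le_div_iff₀ hc₁]
      linarith
    have h2 := mul_le_mul_of_nonneg_right h1 hp.le
    have h3 := mul_nonneg (neg_nonneg.2 hq) (sq_nonneg ‖η ω‖)
    linarith
  · have h1 : c₁ * deriv U (ξ ω) ≤ c₁ * (-deriv (deriv U) (ξ ω) * ‖η ω‖) := by
      have := mul_le_mul_of_nonneg_right h (neg_nonneg.2 hq)
      linarith [hlb _ hω]
    have h2 := mul_le_mul_of_nonneg_right (le_of_mul_le_mul_left h1 hc₁) hn
    have h3 : 0 ≤ c₁⁻¹ * (ξ ω * deriv U (ξ ω)) := by positivity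
    linarith
end

section
/- Let D ⊂ ℝᴺ be an open convex set and w : D → ℝ a convex function. Assume that for some x₀ ∈ D the function w admits the second-order expansion w(x) = w(x₀) + ⟨p₀, x − x₀⟩ + (1/2)·⟨A(x − x₀), x − x₀⟩ + o(‖x − x₀‖²) as x → x₀, for some p₀ ∈ ℝᴺ and a symmetric N × N real matrix A. Let f : ℝᴺ → ℝ be continuously differentiable in a neighborhood of p₀. Then the following chain rule holds: for every ε > 0 there is δ > 0 such that for all x ∈ D with 0 < ‖x − x₀‖ < δ and all p in the subdifferential ∂w(x), one has |f(p) − f(p₀) − ⟨∇f(p₀), A(x − x₀)⟩| ≤ ε·‖x − x₀‖. -/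
open Filter Topology Asymptotics

/-!
The chain rule is the composition of the differentiability of `f` at `p₀` with a first-order
expansion of the subdifferential, `p = p₀ + T (x - x₀) + o(‖x - x₀‖)` uniformly over `p ∈ ∂w(x)`,
where `T` is the self-adjoint operator with matrix `A`.

The expansion of the subdifferential is `norm_subgradient_sub_le`. Put `h = x - x₀`, `r = ‖h‖` and
`q = p - p₀ - T h`. The subgradient inequality at `z = x + k`, combined with the second-order
expansion of `w` at both `x` and `x + k`, gives
`⟪q, k⟫ ≤ ½ ⟪T k, k⟫ + o(r²)` whenever `‖k‖ ≤ r`. Testing with `k` of length `s r` in the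
direction of `q` and dividing by `s r` yields `‖q‖ ≤ (½ ‖T‖ s + o(1) / s) r`; taking `s` small
first makes the right-hand side at most `ε r`.
-/

/-- First-order expansion of the subdifferential: if `w` has the second-order expansion at `x₀`
with gradient `p₀` and self-adjoint Hessian `T`, every subgradient `p` at `x` near `x₀` satisfies
`p = p₀ + T (x - x₀) + o(‖x - x₀‖)`, uniformly in `p`. -/
lemma norm_subgradient_sub_le {E : Type*} [NormedAddCommGroup E] [InnerProductSpace ℝ E]
    {D : Set E} (hD : IsOpen D) {w : E → ℝ} {x₀ : E} (hx₀ : x₀ ∈ D) {p₀ : E} {T : E →L[ℝ] E}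
    (hT : ∀ u v, inner ℝ (T u) v = inner ℝ (T v) u)
    (hexp : (fun x => w x - w x₀ - inner ℝ p₀ (x - x₀)
        - (1 / 2) * inner ℝ (T (x - x₀)) (x - x₀)) =o[𝓝 x₀] fun x => ‖x - x₀‖ ^ 2)
    {ε : ℝ} (hε : 0 < ε) :
    ∃ δ > (0 : ℝ), ∀ x, 0 < ‖x - x₀‖ → ‖x - x₀‖ < δ → ∀ p : E,
      (∀ z ∈ D, w x + inner ℝ p (z - x) ≤ w z) →
      ‖p - p₀ - T (x - x₀)‖ ≤ ε * ‖x - x₀‖ := by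
  obtain ⟨s, hs0, hs1, hsT⟩ : ∃ s : ℝ, 0 < s ∧ s ≤ 1 ∧ s * ‖T‖ ≤ ε := by
    have hM : 0 < ‖T‖ + 1 := by positivity
    refine ⟨min 1 (ε / (‖T‖ + 1)), by positivity, min_le_left _ _, ?_⟩
    calc min 1 (ε / (‖T‖ + 1)) * ‖T‖ ≤ ε / (‖T‖ + 1) * (‖T‖ + 1) := by
          gcongr
          · exact min_le_right _ _
          · linarith
      _ = ε := by field_simp
  -- The error budget is `η (‖h + k‖² + ‖h‖²) ≤ 5 η r²`, to be at most `½ ε s r²`.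
  have hη : 0 < ε * s / 10 := by positivity
  obtain ⟨δ, hδ, hball⟩ := Metric.eventually_nhds_iff.1 ((hexp.bound hη).and (hD.mem_nhds hx₀))
  refine ⟨δ / 2, by positivity, fun x hr hrδ p hp => ?_⟩
  have hbd : ∀ y, ‖y - x₀‖ < δ → |w y - w x₀ - inner ℝ p₀ (y - x₀)
      - (1 / 2) * inner ℝ (T (y - x₀)) (y - x₀)| ≤ ε * s / 10 * ‖y - x₀‖ ^ 2 ∧ y ∈ D := by
    intro y hy
    have := hball (y := y) (by rwa [dist_eq_norm])
    refine ⟨?_, this.2⟩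
    simpa only [Real.norm_eq_abs, abs_pow, abs_norm] using this.1
  set h := x - x₀ with hh
  set r := ‖h‖ with hr_def
  set q := p - p₀ - T h with hq
  by_cases hq0 : ‖q‖ = 0
  · rw [hq0]; positivity
  have hqpos : 0 < ‖q‖ := lt_of_le_of_ne (norm_nonneg _) (Ne.symm hq0)
  set k := (s * r / ‖q‖) • q with hk
  have hkn : ‖k‖ = s * r := by
    rw [hk, norm_smul, Real.norm_of_nonneg (by positivity)]
    field_simp
  have hqk : inner ℝ q k = s * r * ‖q‖ := by
    rw [hk, inner_smul_right, real_inner_self_eq_norm_sq]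
    field_simp
  have hzx : x + k - x₀ = h + k := by rw [hh]; abel
  have hhk : ‖h + k‖ ≤ 2 * r := by
    have := norm_add_le h k
    nlinarith
  obtain ⟨hz, hzD⟩ := hbd (x + k) (by rw [hzx]; linarith)
  obtain ⟨hx, -⟩ := hbd x (by linarith)
  rw [hzx] at hz
  have hsub := hp (x + k) hzD
  rw [add_sub_cancel_left] at hsub
  have hTk : inner ℝ (T k) k ≤ ‖T‖ * (s * r) ^ 2 := by
    calc inner ℝ (T k) k ≤ ‖T k‖ * ‖k‖ := real_inner_le_norm _ _
      _ ≤ ‖T‖ * ‖k‖ * ‖k‖ := by gcongr; exact T.le_opNorm k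
      _ = ‖T‖ * (s * r) ^ 2 := by rw [hkn]; ring
  have hpk : inner ℝ q k = inner ℝ p k - inner ℝ p₀ k - inner ℝ (T h) k := by
    rw [hq, inner_sub_left, inner_sub_left]
  have hz' := (abs_le.1 hz).2
  have hx' := (abs_le.1 hx).1
  rw [map_add, inner_add_right, inner_add_right, inner_add_left, inner_add_left, hT k h] at hz'
  have hsq : ε * s / 10 * ‖h + k‖ ^ 2 ≤ ε * s / 10 * (2 * r) ^ 2 := by gcongr
  have hsT' : s * ‖T‖ * (s * r ^ 2) ≤ ε * (s * r ^ 2) := by gcongr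
  have key : s * r * ‖q‖ ≤ s * r * (ε * r) := by
    rw [← hqk, hpk]
    nlinarith
  exact le_of_mul_le_mul_left key (by positivity)

/-- Lemma 8 of Kramkov–Sîrbu: a chain rule for `f(∂w)` when the convex function `w`
admits a second-order expansion at `x₀` and `f` is continuously differentiable in a
neighborhood of `p₀`. -/
theorem chain_rule_for_subdifferential
    {N : ℕ} (D : Set (EuclideanSpace ℝ (Fin N))) (hD_open : IsOpen D)
    (hD_conv : Convex ℝ D) (w : EuclideanSpace ℝ (Fin N) → ℝ)
    (hw : ConvexOn ℝ D w) (x₀ : EuclideanSpace ℝ (Fin N)) (hx₀ : x₀ ∈ D)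
    (p₀ : EuclideanSpace ℝ (Fin N)) (A : Matrix (Fin N) (Fin N) ℝ) (hA : A.IsSymm)
    (hexp : (fun x => w x - w x₀ - ∑ i, p₀ i * (x i - x₀ i)
        - (1 / 2) * ∑ i, A.mulVec (fun j => x j - x₀ j) i * (x i - x₀ i))
      =o[𝓝 x₀] fun x => ‖x - x₀‖ ^ 2)
    (f : EuclideanSpace ℝ (Fin N) → ℝ) (hf : ContDiffAt ℝ 1 f p₀) :
    ∀ ε > (0 : ℝ), ∃ δ > (0 : ℝ), ∀ x ∈ D, 0 < ‖x - x₀‖ → ‖x - x₀‖ < δ →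
      ∀ p : EuclideanSpace ℝ (Fin N),
        (∀ z ∈ D, w x + ∑ i, p i * (z i - x i) ≤ w z) →
        |f p - f p₀ -
            fderiv ℝ f p₀
              ((EuclideanSpace.equiv (Fin N) ℝ).symm (A.mulVec fun j => x j - x₀ j))|
          ≤ ε * ‖x - x₀‖ := by
  intro ε hε
  set T : EuclideanSpace ℝ (Fin N) →L[ℝ] EuclideanSpace ℝ (Fin N) :=
    LinearMap.toContinuousLinearMap (Matrix.toEuclideanLin A) with hTdef
  have hTapp : ∀ (u : EuclideanSpace ℝ (Fin N)) i, T u i = A.mulVec (fun j => u j) i :=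
    fun u i => rfl
  have hin : ∀ u v : EuclideanSpace ℝ (Fin N), inner ℝ u v = ∑ i, u i * v i := by
    intro u v
    simp [PiLp.inner_apply, mul_comm]
  have hT : ∀ u v, inner ℝ (T u) v = inner ℝ (T v) u := by
    intro u v
    simp only [hin, hTapp, Matrix.mulVec, dotProduct, Finset.sum_mul]
    rw [Finset.sum_comm]
    refine Finset.sum_congr rfl fun i _ => Finset.sum_congr rfl fun j _ => ?_
    rw [hA.apply i j]
    ring
  have hexp' : (fun x => w x - w x₀ - inner ℝ p₀ (x - x₀)
      - (1 / 2) * inner ℝ (T (x - x₀)) (x - x₀)) =o[𝓝 x₀] fun x => ‖x - x₀‖ ^ 2 := by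
    simpa only [hin, hTapp, PiLp.sub_apply] using hexp
  set L := fderiv ℝ f p₀ with hL
  have hfd : HasFDerivAt f L p₀ := (hf.differentiableAt one_ne_zero).hasFDerivAt
  -- Half of `ε` pays for the remainder of `f`, half for `L` applied to the remainder of `p`.
  set ε₁ : ℝ := ε / (2 * (‖L‖ + 1)) with hε₁
  have hε₁pos : 0 < ε₁ := by positivity
  set C : ℝ := ε₁ + ‖T‖ with hC
  have hCpos : 0 < C := by positivity
  obtain ⟨δ₁, hδ₁, hsub⟩ := norm_subgradient_sub_le hD_open hx₀ hT hexp' hε₁pos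
  have hη : 0 < ε / (2 * C) := by positivity
  obtain ⟨δ₂, hδ₂, hball⟩ := Metric.eventually_nhds_iff.1 (hfd.isLittleO.bound hη)
  refine ⟨min δ₁ (δ₂ / C), by positivity, fun x _ hr hrδ p hp => ?_⟩
  have hq := hsub x hr (hrδ.trans_le (min_le_left _ _)) p
    (by simpa only [hin, PiLp.sub_apply] using hp)
  have hpp : ‖p - p₀‖ ≤ C * ‖x - x₀‖ := by
    calc ‖p - p₀‖ = ‖(p - p₀ - T (x - x₀)) + T (x - x₀)‖ := by rw [sub_add_cancel]
      _ ≤ ε₁ * ‖x - x₀‖ + ‖T‖ * ‖x - x₀‖ :=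
          (norm_add_le _ _).trans (add_le_add hq (T.le_opNorm _))
      _ = C * ‖x - x₀‖ := by rw [hC]; ring
  have hpδ : ‖p - p₀‖ < δ₂ := by
    have := (lt_div_iff₀ hCpos).1 (hrδ.trans_le (min_le_right _ _))
    linarith
  have hfp : |f p - f p₀ - L (p - p₀)| ≤ ε / (2 * C) * ‖p - p₀‖ := by
    simpa only [Real.norm_eq_abs] using hball (y := p) (by rwa [dist_eq_norm])
  change |f p - f p₀ - L (T (x - x₀))| ≤ ε * ‖x - x₀‖
  have hsplit : f p - f p₀ - L (T (x - x₀))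
      = (f p - f p₀ - L (p - p₀)) + L (p - p₀ - T (x - x₀)) := by
    rw [map_sub L (p - p₀)]; ring
  have h1 : ε / (2 * C) * ‖p - p₀‖ ≤ ε / 2 * ‖x - x₀‖ := by
    calc ε / (2 * C) * ‖p - p₀‖ ≤ ε / (2 * C) * (C * ‖x - x₀‖) := by gcongr
      _ = ε / 2 * ‖x - x₀‖ := by field_simp
  have h2 : |L (p - p₀ - T (x - x₀))| ≤ ε / 2 * ‖x - x₀‖ := by
    calc |L (p - p₀ - T (x - x₀))| ≤ ‖L‖ * ‖p - p₀ - T (x - x₀)‖ := L.le_opNorm _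
      _ ≤ (‖L‖ + 1) * (ε₁ * ‖x - x₀‖) := by gcongr; linarith
      _ = ε / 2 * ‖x - x₀‖ := by rw [hε₁]; field_simp
  rw [hsplit]
  exact (abs_add_le _ _).trans (by linarith)
end

section
/- Let U : (0,∞) → ℝ be a strictly increasing, strictly concave, twice continuously differentiable function whose relative risk-aversion coefficient A(x) = -x·U''(x)/U'(x) satisfies c₁ < A(x) < c₂ for all x > 0, for some constants 0 < c₁ < c₂ < ∞. Then for any constant 0 < a < 1 there exist constants 0 < b₁ < b₂ < ∞ such that for every x > 0: b₁·|U''(x)| ≤ min_{|z−x| ≤ a·x} |U''(z)| and max_{|z−x| ≤ a·x} |U''(z)| ≤ b₂·|U''(x)|, where z ranges over the interval [x(1−a), x(1+a)] ⊂ (0,∞). -/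
/-! Write `g = U'`. Monotonicity of `U` and the lower bound on the risk aversion give `g > 0`, and
the bounds become `c₁ g(x) < -x g'(x) < c₂ g(x)`. Hence `g` is decreasing while `x ↦ g(x) x ^ c₂` is
increasing (its derivative is `x ^ (c₂ - 1) (x g' + c₂ g) > 0`), so `g(v) ≤ K ^ c₂ g(u)` whenever
`u ≤ K v` with `K ≥ 1` (`le_rpow_mul_of_le_mul`). As `|g'(x)|` is comparable to `g(x) / x`, this
yields `|g'(v)| ≤ (c₂ / c₁) K ^ c₂ K |g'(u)|` (`abs_deriv_le_of_le_mul`). The theorem applies this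
with `K = 1 / (1 - a)`, which bounds both `x / z` and `z / x`, once for each order of `x` and `z`. -/

/-- Marginal utility grows at most polynomially, with exponent `c`, when its argument decreases:
`g` is antitone and `x ↦ g x * x ^ c` is monotone. -/
lemma le_rpow_mul_of_le_mul {g : ℝ → ℝ} {c K : ℝ} (hc : 0 < c) (hK : 1 ≤ K)
    (hpos : ∀ x > 0, 0 < g x) (hneg : ∀ x > 0, deriv g x < 0)
    (hupper : ∀ x > 0, -(x * deriv g x) < c * g x)
    {u v : ℝ} (hu : 0 < u) (hv : 0 < v) (huv : u ≤ K * v) : g v ≤ K ^ c * g u := by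
  have hdiff : ∀ x > 0, DifferentiableAt ℝ g x := fun x hx =>
    differentiableAt_of_deriv_ne_zero (hneg x hx).ne
  rcases le_total u v with h | h
  · have hanti : AntitoneOn g (Set.Ioi 0) := by
      refine antitoneOn_of_deriv_nonpos (convex_Ioi 0)
        (fun x hx => (hdiff x hx).continuousAt.continuousWithinAt) ?_ ?_
      · rw [interior_Ioi]
        exact fun x hx => (hdiff x hx).differentiableWithinAt
      · rw [interior_Ioi]
        exact fun x hx => (hneg x hx).le
    have h1 : 1 ≤ K ^ c := Real.one_le_rpow hK hc.le
    exact (hanti hu hv h).trans (le_mul_of_one_le_left (hpos u hu).le h1)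
  · have hder : ∀ x > 0, HasDerivAt (fun y => g y * y ^ c)
        (deriv g x * x ^ c + g x * (c * x ^ (c - 1))) x := fun x hx =>
      (hdiff x hx).hasDerivAt.mul (Real.hasDerivAt_rpow_const (Or.inl hx.ne'))
    have hmono : MonotoneOn (fun y => g y * y ^ c) (Set.Ioi 0) := by
      refine monotoneOn_of_deriv_nonneg (convex_Ioi 0)
        (fun x hx => (hder x hx).continuousAt.continuousWithinAt) ?_ ?_
      · rw [interior_Ioi]
        exact fun x hx => (hder x hx).differentiableAt.differentiableWithinAt
      · rw [interior_Ioi]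
        intro x hx
        have hx : 0 < x := hx
        have hxc : x ^ c = x ^ (c - 1) * x := by
          rw [← Real.rpow_add_one hx.ne', sub_add_cancel]
        rw [(hder x hx).deriv, hxc]
        have h0 : 0 ≤ x ^ (c - 1) * (x * deriv g x + c * g x) :=
          mul_nonneg (Real.rpow_nonneg hx.le _) (by linarith [hupper x hx])
        linarith
    have h1 : g v * v ^ c ≤ g u * u ^ c := hmono hv hu h
    have h2 : u ^ c ≤ K ^ c * v ^ c := by
      rw [← Real.mul_rpow (by linarith) hv.le]
      exact Real.rpow_le_rpow hu.le huv hc.le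
    have h3 : g u * u ^ c ≤ g u * (K ^ c * v ^ c) := mul_le_mul_of_nonneg_left h2 (hpos u hu).le
    refine le_of_mul_le_mul_right ?_ (Real.rpow_pos_of_pos hv c)
    linarith

lemma abs_deriv_le_of_le_mul {g : ℝ → ℝ} {c₁ c₂ K : ℝ} (hc₁ : 0 < c₁) (hc₂ : 0 < c₂) (hK : 1 ≤ K)
    (hpos : ∀ x > 0, 0 < g x) (hlower : ∀ x > 0, c₁ * g x < -(x * deriv g x))
    (hupper : ∀ x > 0, -(x * deriv g x) < c₂ * g x)
    {u v : ℝ} (hu : 0 < u) (hv : 0 < v) (huv : u ≤ K * v) :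
    |deriv g v| ≤ c₂ / c₁ * K ^ c₂ * K * |deriv g u| := by
  have hneg : ∀ x > 0, deriv g x < 0 := fun x hx => by
    have h1 := hlower x hx
    have h2 := mul_pos hc₁ (hpos x hx)
    exact neg_of_mul_neg_right (by linarith : x * deriv g x < 0) hx.le
  have hgr := le_rpow_mul_of_le_mul hc₂ hK hpos hneg hupper hu hv huv
  rw [abs_of_neg (hneg v hv), abs_of_neg (hneg u hu)]
  have hKc : 0 < K ^ c₂ := Real.rpow_pos_of_pos (by linarith) _
  have hgu : g u ≤ K * v * -deriv g u / c₁ := by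
    rw [le_div_iff₀ hc₁]
    have := mul_le_mul_of_nonneg_right huv (neg_pos.2 (hneg u hu)).le
    linarith [hlower u hu]
  refine le_of_mul_le_mul_left ?_ hv
  calc v * -deriv g v ≤ c₂ * g v := by linarith [hupper v hv]
    _ ≤ c₂ * (K ^ c₂ * (K * v * -deriv g u / c₁)) := by gcongr; exact hgr.trans (by gcongr)
    _ = v * (c₂ / c₁ * K ^ c₂ * K * -deriv g u) := by ring

/-- Lemma 9 of Kramkov–Sîrbu: if the relative risk aversion of `U` is uniformly
bounded away from zero and infinity, then for any `0 < a < 1` the absolute value of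
`U''` is comparable, uniformly in `x > 0`, on the interval `[x(1-a), x(1+a)]`
with `|U''(x)|`. -/
theorem second_derivative_comparable_on_relative_intervals
    (U : ℝ → ℝ) (c₁ c₂ : ℝ) (hc₁ : 0 < c₁) (hc₁₂ : c₁ < c₂)
    (hU_mono : StrictMonoOn U (Set.Ioi 0))
    (hU_conc : StrictConcaveOn ℝ (Set.Ioi 0) U)
    (hU_smooth : ContDiffOn ℝ 2 U (Set.Ioi 0))
    (hA : ∀ x > (0 : ℝ),
      c₁ < -(x * deriv (deriv U) x) / deriv U x ∧
        -(x * deriv (deriv U) x) / deriv U x < c₂) :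
    ∀ a : ℝ, 0 < a → a < 1 → ∃ b₁ b₂ : ℝ, 0 < b₁ ∧ b₁ < b₂ ∧
      ∀ x > (0 : ℝ), ∀ z : ℝ, x * (1 - a) ≤ z → z ≤ x * (1 + a) →
        b₁ * |deriv (deriv U) x| ≤ |deriv (deriv U) z| ∧
        |deriv (deriv U) z| ≤ b₂ * |deriv (deriv U) x| := by
  have hpos : ∀ x > 0, 0 < deriv U x := by
    intro x hx
    have h0 : 0 ≤ deriv U x := by
      rw [← derivWithin_of_isOpen isOpen_Ioi (Set.mem_Ioi.2 hx)]
      exact hU_mono.monotoneOn.derivWithin_nonneg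
    refine lt_of_le_of_ne h0 fun h => ?_
    -- If `U'(x) = 0`, the quotient in `hA` is `0` by convention, against `0 < c₁`.
    have h1 := (hA x hx).1
    rw [← h, div_zero] at h1
    linarith
  have hlower : ∀ x > 0, c₁ * deriv U x < -(x * deriv (deriv U) x) := fun x hx =>
    (lt_div_iff₀ (hpos x hx)).1 (hA x hx).1
  have hupper : ∀ x > 0, -(x * deriv (deriv U) x) < c₂ * deriv U x := fun x hx =>
    (div_lt_iff₀ (hpos x hx)).1 (hA x hx).2
  intro a ha0 ha1
  have ha : 0 < 1 - a := by linarith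
  obtain ⟨K, hKdef⟩ : ∃ K, K = 1 / (1 - a) := ⟨_, rfl⟩
  have hKa : K * (1 - a) = 1 := by rw [hKdef, one_div_mul_cancel ha.ne']
  have hK : 1 ≤ K := by rw [hKdef, le_div_iff₀ ha]; linarith
  have haK : 1 + a ≤ K := by rw [hKdef, le_div_iff₀ ha]; nlinarith
  have hc₂ : 0 < c₂ := hc₁.trans hc₁₂
  obtain ⟨M, hM⟩ : ∃ M, M = c₂ / c₁ * K ^ c₂ * K := ⟨_, rfl⟩
  have hM1 : 1 < M := by
    have h1 : 1 < c₂ / c₁ := (one_lt_div hc₁).2 hc₁₂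
    have h2 : 1 ≤ K ^ c₂ := Real.one_le_rpow hK hc₂.le
    rw [hM]
    exact one_lt_mul_of_lt_of_le (one_lt_mul_of_lt_of_le h1 h2) hK
  have hM0 : 0 < M := by linarith
  refine ⟨M⁻¹, M, inv_pos.2 hM0, (inv_lt_one_of_one_lt₀ hM1).trans hM1, ?_⟩
  intro x hx z hz1 hz2
  have hz : 0 < z := (mul_pos hx ha).trans_le hz1
  have hxz : x ≤ K * z := by
    have h1 := mul_le_mul_of_nonneg_left hz1 (by linarith : 0 ≤ K)
    have h2 : K * (x * (1 - a)) = x := by rw [mul_left_comm, hKa, mul_one]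
    linarith
  have hzx : z ≤ K * x := by
    have h1 := mul_le_mul_of_nonneg_left haK hx.le
    linarith
  constructor
  · rw [inv_mul_le_iff₀ hM0, hM]
    exact abs_deriv_le_of_le_mul hc₁ hc₂ hK hpos hlower hupper hz hx hzx
  · rw [hM]
    exact abs_deriv_le_of_le_mul hc₁ hc₂ hK hpos hlower hupper hx hz hxz
end

section
/- Let U : ℝ → ℝ be twice continuously differentiable with U'(x) > 0 and U''(x) < 0 for all x ∈ ℝ, and suppose that its absolute risk-tolerance coefficient is affine: -U'(x)/U''(x) = c·x + d for all x ∈ ℝ, for some constants c, d ∈ ℝ. Then necessarily c = 0 and d > 0, and there exist constants c₁ > 0 and c₂ ∈ ℝ such that U(x) = -c₁·e^{-x/d} + c₂ for all x ∈ ℝ; that is, U is an exponential utility function. -/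
/-!
Since `U' > 0 > U''`, the affine function `c * x + d` is positive on all of `ℝ`; a non-constant
affine function vanishes at `-d / c`, so `c = 0` and `d > 0`. The remaining equation
`U' + d * U'' = 0` makes both `U' * exp (x / d)` and `U + d * U'` constant, which gives
`U' = U' 0 * exp (-x / d)` and then `U`, with `c₁ = d * U' 0`.
-/

/-- The case `a = -∞` of the characterization in Theorem 7 of Kramkov–Sîrbu: a utility
function on the whole real line with affine absolute risk tolerance is an exponential
utility. -/
theorem affine_risk_tolerance_on_real_line_is_exponential
    (U : ℝ → ℝ) (hU_smooth : ContDiff ℝ 2 U)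
    (hU' : ∀ x : ℝ, 0 < deriv U x) (hU'' : ∀ x : ℝ, deriv (deriv U) x < 0)
    (c d : ℝ) (ht : ∀ x : ℝ, -(deriv U x / deriv (deriv U) x) = c * x + d) :
    c = 0 ∧ 0 < d ∧
      ∃ c₁ > (0 : ℝ), ∃ c₂ : ℝ, ∀ x : ℝ, U x = -c₁ * Real.exp (-x / d) + c₂ := by
  have hpos : ∀ x : ℝ, 0 < c * x + d := fun x => by
    rw [← ht x, neg_pos]
    exact div_neg_of_pos_of_neg (hU' x) (hU'' x)
  have hc : c = 0 := by
    by_contra hc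
    have h := hpos (-d / c)
    rw [mul_div_cancel₀ _ hc, neg_add_cancel] at h
    exact lt_irrefl _ h
  subst hc
  have hd : 0 < d := by simpa using hpos 0
  have hode : ∀ x, deriv U x + d * deriv (deriv U) x = 0 := fun x => by
    have h := ht x
    have hne := (hU'' x).ne
    rw [zero_mul, zero_add] at h
    rw [← h]
    field_simp
    ring
  have hD1 : ∀ x, HasDerivAt U (deriv U x) x := fun x =>
    (hU_smooth.differentiable (by norm_num) x).hasDerivAt
  have hD2 : ∀ x, HasDerivAt (deriv U) (deriv (deriv U) x) x := fun x =>
    ((hU_smooth.deriv' (n := 1)).differentiable (by norm_num) x).hasDerivAt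
  have hF : ∀ x, HasDerivAt (fun y => deriv U y * Real.exp (y / d)) 0 x := fun x => by
    refine ((hD2 x).mul (((hasDerivAt_id x).div_const d).exp)).congr_deriv ?_
    have h : deriv U x = -(d * deriv (deriv U) x) := by linarith [hode x]
    rw [h]
    simp only [id]
    field_simp
    ring
  have hG : ∀ x, HasDerivAt (fun y => U y + d * deriv U y) 0 x := fun x => by
    exact ((hD1 x).add ((hD2 x).const_mul d)).congr_deriv (hode x)
  refine ⟨rfl, hd, d * deriv U 0, mul_pos hd (hU' 0), U 0 + d * deriv U 0, fun x => ?_⟩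
  have h1 := is_const_of_deriv_eq_zero (fun y => (hF y).differentiableAt)
    (fun y => (hF y).deriv) x 0
  have h2 := is_const_of_deriv_eq_zero (fun y => (hG y).differentiableAt)
    (fun y => (hG y).deriv) x 0
  simp only [zero_div, Real.exp_zero, mul_one] at h1 h2
  have h3 : deriv U x = deriv U 0 * Real.exp (-x / d) := by
    rw [← h1, mul_assoc, ← Real.exp_add, neg_div, add_neg_cancel, Real.exp_zero, mul_one]
  rw [h3] at h2
  linarith
end

section
/- Let a ∈ ℝ and let U : (a,∞) → ℝ be twice continuously differentiable with U'(x) > 0 and U''(x) < 0 for all x > a, satisfying the Inada conditions lim_{x→a⁺} U'(x) = ∞ and lim_{x→∞} U'(x) = 0. Suppose its absolute risk-tolerance coefficient is affine: -U'(x)/U''(x) = c·x + d for all x > a, for some constants c, d ∈ ℝ. Then necessarily c > 0 and d = -c·a, and: if c ≠ 1, there exist constants c₁ > 0 and c₂ ∈ ℝ such that U(x) = c₁·((x−a)^p − 1)/p + c₂ for all x > a, where p = 1 − 1/c satisfies p < 1 and p ≠ 0; while if c = 1, there exist constants c₁ > 0 and c₂ ∈ ℝ such that U(x) = c₁·ln(x−a)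 + c₂ for all x > a. -/
/-!
Write `f = U'` and `t x = c * x + d`, so that `f' = -f / t` with `f' < 0 < f`, hence `t > 0`, on `(a, ∞)`.
Positivity of `t` on an unbounded interval gives `0 ≤ c`, and letting `x ↓ a` gives `e = t a ≥ 0`.
If `e > 0`, then `t ≥ e` and `f * exp (x / e)` is nondecreasing, so `f` stays bounded near `a`,
contrary to the Inada condition at `a`. Hence `e = 0`, that is `t x = c * (x - a)`, and `c > 0`.
Now `f x * (x - a) ^ (1 / c)` has zero derivative, so `f x = k * (x - a) ^ (-(1 / c))` with `k > 0`,
and integrating once more gives the power or the logarithm.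
-/

open Filter Topology

/-- Two functions with the same derivative on `(a, ∞)` differ there by a constant. -/
lemma exists_eq_add_const_on_Ioi {a : ℝ} {F G g : ℝ → ℝ}
    (hF : ∀ x > a, HasDerivAt F (g x) x) (hG : ∀ x > a, HasDerivAt G (g x) x) :
    ∃ C : ℝ, ∀ x > a, F x = G x + C := by
  have hd : ∀ x > a, HasDerivAt (fun y => F y - G y) 0 x := fun x hx => by
    simpa using! (hF x hx).fun_sub (hG x hx)
  obtain ⟨C, hC⟩ := isOpen_Ioi.exists_is_const_of_deriv_eq_zero (isPreconnected_Ioi (a := a))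
    (fun x hx => (hd x hx).differentiableAt.differentiableWithinAt) (fun x hx => (hd x hx).deriv)
  exact ⟨C, fun x hx => by linarith [hC x hx]⟩

/-- A positive solution of `f' = -f / t` with `t` bounded below by a positive constant cannot blow
up at `a`: `f * exp (x / e)` is nondecreasing. -/
lemma not_tendsto_atTop_of_tolerance_ge {a e : ℝ} {f f' t : ℝ → ℝ} (he : 0 < e)
    (hf : ∀ x > a, HasDerivAt f (f' x) x) (hpos : ∀ x > a, 0 < f x)
    (hte : ∀ x > a, e ≤ t x) (hode : ∀ x > a, f' x = -(f x / t x)) :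
    ¬ Tendsto f (𝓝[>] a) atTop := by
  intro hlim
  have hd : ∀ x > a, HasDerivAt (fun y => f y * Real.exp (y / e))
      (f' x * Real.exp (x / e) + f x * (Real.exp (x / e) * (1 / e))) x := fun x hx =>
    (hf x hx).mul (((hasDerivAt_id x).div_const e).exp)
  have hmono : MonotoneOn (fun y => f y * Real.exp (y / e)) (Set.Ioi a) := by
    refine monotoneOn_of_deriv_nonneg (convex_Ioi a)
      (fun x hx => (hd x hx).continuousAt.continuousWithinAt) ?_ ?_
    · rw [interior_Ioi]
      exact fun x hx => (hd x hx).differentiableAt.differentiableWithinAt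
    · rw [interior_Ioi]
      intro x hx
      rw [(hd x hx).deriv, hode x hx]
      have h1 : f x / t x ≤ f x / e := div_le_div_of_nonneg_left (hpos x hx).le he (hte x hx)
      have h2 : -(f x / t x) * Real.exp (x / e) + f x * (Real.exp (x / e) * (1 / e))
          = (f x / e - f x / t x) * Real.exp (x / e) := by ring
      rw [h2]
      exact mul_nonneg (sub_nonneg.2 h1) (Real.exp_pos _).le
  set B := f (a + 1) * Real.exp ((a + 1) / e) / Real.exp (a / e) with hB
  have hbound : ∀ x ∈ Set.Ioo a (a + 1), f x ≤ B := by
    intro x hx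
    rw [hB, le_div_iff₀ (Real.exp_pos _)]
    have hax : Real.exp (a / e) ≤ Real.exp (x / e) :=
      Real.exp_le_exp.2 (div_le_div_of_nonneg_right hx.1.le he.le)
    exact (mul_le_mul_of_nonneg_left hax (hpos x hx.1).le).trans
      (hmono hx.1 (show a < a + 1 by linarith) hx.2.le)
  obtain ⟨x, hxB, hx⟩ := ((hlim.eventually_gt_atTop B).and
    (Ioo_mem_nhdsGT (show a < a + 1 by linarith))).exists
  exact absurd (hbound x hx) (not_le.2 hxB)

/-- The case `a > -∞` of the characterization in Theorem 7 of Kramkov–Sîrbu: a utility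
function on `(a,∞)` satisfying the Inada conditions and having affine absolute risk
tolerance `-U'/U'' = c·x + d` is (up to affine transformation) a power utility or a
logarithmic utility shifted to the domain `(a,∞)`; moreover `c > 0` and `d = -c·a`. -/
theorem affine_risk_tolerance_on_halfline_is_power_or_log
    (a : ℝ) (U : ℝ → ℝ)
    (hU_smooth : ContDiffOn ℝ 2 U (Set.Ioi a))
    (hU' : ∀ x > a, 0 < deriv U x)
    (hU'' : ∀ x > a, deriv (deriv U) x < 0)
    (hInada_a : Tendsto (deriv U) (𝓝[>] a) atTop)
    (hInada_top : Tendsto (deriv U) atTop (𝓝 0))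
    (c d : ℝ) (ht : ∀ x > a, -(deriv U x / deriv (deriv U) x) = c * x + d) :
    0 < c ∧ d = -(c * a) ∧
    (c ≠ 1 →
      (1 - 1 / c < 1 ∧ 1 - 1 / c ≠ 0) ∧
      ∃ c₁ > (0 : ℝ), ∃ c₂ : ℝ, ∀ x > a,
        U x = c₁ * ((x - a) ^ (1 - 1 / c) - 1) / (1 - 1 / c) + c₂) ∧
    (c = 1 →
      ∃ c₁ > (0 : ℝ), ∃ c₂ : ℝ, ∀ x > a,
        U x = c₁ * Real.log (x - a) + c₂) := by
  -- The strict signs of `U'` and `U''` exclude the junk value `0` of `deriv`.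
  have hdU : ∀ x > a, HasDerivAt U (deriv U x) x := fun x hx =>
    (differentiableAt_of_deriv_ne_zero (hU' x hx).ne').hasDerivAt
  have hdU' : ∀ x > a, HasDerivAt (deriv U) (deriv (deriv U) x) x := fun x hx =>
    (differentiableAt_of_deriv_ne_zero (hU'' x hx).ne).hasDerivAt
  have htpos : ∀ x > a, 0 < c * x + d := fun x hx => by
    rw [← ht x hx]
    exact neg_pos.2 (div_neg_of_pos_of_neg (hU' x hx) (hU'' x hx))
  have hode : ∀ x > a, deriv (deriv U) x = -(deriv U x / (c * x + d)) := fun x hx => by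
    have h2 := (hU'' x hx).ne
    have h1 := (hU' x hx).ne'
    rw [← ht x hx]
    field_simp
  have hc0 : 0 ≤ c := by
    by_contra! hc
    -- The value of `c * x + d` at this point is at most `-1`.
    have h := htpos (a + (|c * a + d| + 1) / (-c))
      (by have : 0 < (|c * a + d| + 1) / (-c) := div_pos (by positivity) (by linarith)
          linarith)
    have h2 : c * (a + (|c * a + d| + 1) / (-c)) + d = c * a + d - (|c * a + d| + 1) := by
      have hcne : c ≠ 0 := hc.ne
      field_simp
      ring
    rw [h2] at h
    linarith [le_abs_self (c * a + d)]
  have he0 : 0 ≤ c * a + d := by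
    have hcont : Tendsto (fun x => c * x + d) (𝓝[>] a) (𝓝 (c * a + d)) :=
      (Continuous.tendsto (by fun_prop) a).mono_left nhdsWithin_le_nhds
    exact ge_of_tendsto hcont (eventually_mem_nhdsWithin.mono fun x hx => (htpos x hx).le)
  have he : c * a + d = 0 := by
    by_contra hne
    exact not_tendsto_atTop_of_tolerance_ge (lt_of_le_of_ne he0 (Ne.symm hne)) hdU' hU'
      (t := fun x => c * x + d)
      (fun x hx => by
        have := mul_le_mul_of_nonneg_left hx.le hc0
        simpa using this) hode hInada_a
  have hcpos : 0 < c := by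
    have := htpos (a + 1) (by linarith)
    linarith
  -- `U' x * (x - a) ^ (1 / c)` is constant.
  obtain ⟨k, hk⟩ : ∃ k : ℝ, ∀ x > a, deriv U x * (x - a) ^ (1 / c) = k := by
    have hd : ∀ x > a, HasDerivAt (fun y => deriv U y * (y - a) ^ (1 / c)) 0 x := by
      intro x hx
      have hxa : 0 < x - a := sub_pos.2 hx
      have h := (hdU' x hx).mul
        (((hasDerivAt_id x).sub_const a).rpow_const (p := 1 / c) (Or.inl hxa.ne'))
      refine h.congr_deriv ?_
      have hlin : c * x + d = c * (x - a) := by linarith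
      simp only [id]
      rw [hode x hx, hlin, Real.rpow_sub_one hxa.ne']
      field_simp
      ring
    obtain ⟨k, hk⟩ := exists_eq_add_const_on_Ioi hd (fun x _ => hasDerivAt_const x (0 : ℝ))
    exact ⟨k, fun x hx => by simpa using hk x hx⟩
  have hkpos : 0 < k := by
    rw [← hk (a + 1) (by linarith)]
    exact mul_pos (hU' _ (by linarith)) (Real.rpow_pos_of_pos (by linarith) _)
  have hU'eq : ∀ x > a, deriv U x = k * (x - a) ^ (-(1 / c)) := fun x hx => by
    have hxa : 0 < x - a := sub_pos.2 hx
    rw [Real.rpow_neg hxa.le, ← hk x hx,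
      mul_inv_cancel_right₀ (Real.rpow_pos_of_pos hxa _).ne']
  refine ⟨hcpos, by linarith, fun hc1 => ?_, fun hc1 => ?_⟩
  · have hp : 1 - 1 / c ≠ 0 := by
      intro h
      field_simp at h
      exact hc1 (by linarith)
    refine ⟨⟨by linarith [one_div_pos.2 hcpos], hp⟩, k, hkpos, ?_⟩
    refine exists_eq_add_const_on_Ioi hdU (fun x hx => ?_)
    have hxa : 0 < x - a := sub_pos.2 hx
    have h := ((((((hasDerivAt_id x).sub_const a).rpow_const (p := 1 - 1 / c)
      (Or.inl hxa.ne')).sub_const 1).const_mul k).div_const (1 - 1 / c))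
    refine h.congr_deriv ?_
    rw [hU'eq x hx, show -(1 / c) = 1 - 1 / c - 1 by ring]
    simp only [id]
    generalize 1 - 1 / c = p at hp
    field_simp
  · refine ⟨k, hkpos, exists_eq_add_const_on_Ioi hdU (fun x hx => ?_)⟩
    have hxa : 0 < x - a := sub_pos.2 hx
    refine ((((hasDerivAt_id x).sub_const a).log hxa.ne').const_mul k).congr_deriv ?_
    rw [hU'eq x hx, hc1, one_div_one, Real.rpow_neg_one]
    simp
end

section
/- Let p ∈ ℝᵐ and let D be a real m × m matrix. Suppose that for every z ∈ ℝᵐ the matrix p·zᵀ + D is negative semidefinite, that is, ⟨q, p⟩·⟨z, q⟩ + ⟨q, D·q⟩ ≤ 0 for all q ∈ ℝᵐ. Then p = 0. -/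
/-- The key linear-algebra step in the implication 4 ⟹ 2 of Theorem 9 of
Kramkov–Sîrbu: if `p·zᵀ + D` is negative semidefinite for every `z`, then `p = 0`. -/
theorem vector_vanishes_of_rank_one_perturbations_neg_semidef
    (m : ℕ) (p : Fin m → ℝ) (D : Matrix (Fin m) (Fin m) ℝ)
    (h : ∀ z q : Fin m → ℝ,
      (∑ i, q i * p i) * (∑ i, z i * q i) + ∑ i, q i * D.mulVec q i ≤ 0) :
    p = 0 := by
  by_contra hp
  have hs : ∑ i, p i * p i ≠ 0 := fun h0 => hp (dotProduct_self_eq_zero.mp h0)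
  -- Test with `q = p` and `z = t • p`, where `t` is scaled so that the left side equals `1`.
  have h1 := h (((1 - ∑ i, p i * D.mulVec p i) / (∑ i, p i * p i) ^ 2) • p) p
  simp only [Pi.smul_apply, smul_eq_mul, mul_assoc, ← Finset.mul_sum] at h1
  generalize ∑ i, p i * p i = s at hs h1
  field_simp at h1
  linarith
end

section
/- Let U : (0,∞) → ℝ be strictly increasing, strictly concave and twice continuously differentiable, and suppose its relative risk-aversion coefficient A(x) = -x·U''(x)/U'(x) satisfies c₁ < A(x) < c₂ for all x > 0, for some constants 0 < c₁ < c₂ < ∞. Then U satisfies the Inada conditions lim_{x→0⁺} U'(x) = ∞ and lim_{x→∞} U'(x) = 0, and its asymptotic elasticity is strictly less than one: limsup_{x→∞} x·U'(x)/U(x) < 1 (the ratio being well defined for all large x, since the strictly increasing function U vanishes at most once). -/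
/-!
Write `A` for the relative risk aversion. Only the lower bound `A > c₁ > 0` is needed. Since
`U' > 0`, it says `x U''(x) < -c₁ U'(x)`, which makes two functions nonincreasing on `(0, ∞)`:

* `x ^ c₁ * U'(x)`. Comparing with its value at `1` gives `U'(x) ≥ U'(1) x ^ (-c₁)` for `x ≤ 1`
  and `U'(x) ≤ U'(1) x ^ (-c₁)` for `x ≥ 1`, hence both Inada conditions.
* `x U'(x) - (1 - c₁) U(x)`. So `x U'(x) ≤ (1 - c₁) U(x) + K` for `x ≥ 1`, and if `U` is unbounded
  above the ratio `x U'(x) / U(x)` is eventually at most `1 - c₁ / 2`.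

If `U` is bounded above with `L = sup U > 0`, concavity gives `(x / 2) U'(x) ≤ U(x) - U(x / 2)`,
which tends to `0`, so the ratio is eventually at most `1 / 2`. If `L ≤ 0` the ratio is never
positive.
-/

open Filter Topology

/-- No lower bound on `f` is required: if the set of eventual upper bounds of `f` is not bounded
below, then its infimum, the real `limsup`, is the junk value `0`, which is also less than `1`. -/
lemma limsup_lt_one_of_eventually_le {f : ℝ → ℝ} {a : ℝ} (ha : a < 1)
    (h : ∀ᶠ x in atTop, f x ≤ a) : Filter.limsup f atTop < 1 := by
  rw [Filter.limsup_eq]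
  by_cases hb : BddBelow {a | ∀ᶠ x in atTop, f x ≤ a}
  · exact (csInf_le hb h).trans_lt ha
  · rw [Real.sInf_of_not_bddBelow hb]
    exact one_pos

lemma antitoneOn_Ioi_of_hasDerivAt_nonpos {f f' : ℝ → ℝ}
    (hf : ∀ x > (0 : ℝ), HasDerivAt f (f' x) x) (hf' : ∀ x > (0 : ℝ), f' x ≤ 0) :
    AntitoneOn f (Set.Ioi 0) := by
  refine antitoneOn_of_deriv_nonpos (convex_Ioi 0)
    (fun x hx => (hf x hx).continuousAt.continuousWithinAt) ?_ ?_
  · rw [interior_Ioi]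
    exact fun x hx => (hf x hx).differentiableAt.differentiableWithinAt
  · rw [interior_Ioi]
    intro x hx
    rw [(hf x hx).deriv]
    exact hf' x hx

/-- Both Inada conditions, for a positive function `u` (the marginal utility) whose elasticity
`x u'(x) / u(x)` is at most `-c`. -/
lemma inada_of_elasticity_le {u u' : ℝ → ℝ} {c : ℝ} (hc : 0 < c)
    (hu : ∀ x > (0 : ℝ), HasDerivAt u (u' x) x) (hpos : ∀ x > (0 : ℝ), 0 < u x)
    (hle : ∀ x > (0 : ℝ), x * u' x ≤ -c * u x) :
    Tendsto u (𝓝[>] 0) atTop ∧ Tendsto u atTop (𝓝 0) := by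
  have hanti : AntitoneOn (fun x => x ^ c * u x) (Set.Ioi 0) := by
    refine antitoneOn_Ioi_of_hasDerivAt_nonpos
      (fun x hx => (Real.hasDerivAt_rpow_const (Or.inl hx.ne')).mul (hu x hx)) ?_
    intro x hx
    have h1 : x ^ c = x ^ (c - 1) * x := by
      rw [← Real.rpow_add_one hx.ne']; congr 1; ring
    have h2 : c * x ^ (c - 1) * u x + x ^ c * u' x = x ^ (c - 1) * (c * u x + x * u' x) := by
      rw [h1]; ring
    rw [h2]
    exact mul_nonpos_of_nonneg_of_nonpos (Real.rpow_nonneg hx.le _) (by linarith [hle x hx])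
  have h1 : 0 < u 1 := hpos 1 one_pos
  constructor
  · have ht : Tendsto (fun x : ℝ => u 1 * x ^ (-c)) (𝓝[>] 0) atTop :=
      (tendsto_rpow_neg_nhdsGT_zero (neg_neg_of_pos hc)).const_mul_atTop h1
    refine tendsto_atTop_mono' _ ?_ ht
    filter_upwards [Ioo_mem_nhdsGT (zero_lt_one (α := ℝ))] with x hx
    have h := hanti (Set.mem_Ioi.2 hx.1) (Set.mem_Ioi.2 one_pos) hx.2.le
    simp only [Real.one_rpow, one_mul] at h
    rw [Real.rpow_neg hx.1.le, ← div_eq_mul_inv, div_le_iff₀ (Real.rpow_pos_of_pos hx.1 _)]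
    linarith
  · have ht : Tendsto (fun x : ℝ => u 1 * x ^ (-c)) atTop (𝓝 0) := by
      simpa using (tendsto_rpow_neg_atTop hc).const_mul (u 1)
    refine tendsto_of_tendsto_of_tendsto_of_le_of_le' tendsto_const_nhds ht ?_ ?_
    · filter_upwards [eventually_gt_atTop 0] with x hx using (hpos x hx).le
    · filter_upwards [eventually_ge_atTop 1] with x hx
      have hx0 : 0 < x := one_pos.trans_le hx
      have h := hanti (Set.mem_Ioi.2 one_pos) (Set.mem_Ioi.2 hx0) hx
      simp only [Real.one_rpow, one_mul] at h
      rw [Real.rpow_neg hx0.le, ← div_eq_mul_inv, le_div_iff₀ (Real.rpow_pos_of_pos hx0 _)]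
      linarith

/-- The case of a utility that is unbounded above. -/
lemma elasticity_le_of_not_bddAbove {U u u' : ℝ → ℝ} {c : ℝ} (hc : 0 < c)
    (hmono : StrictMonoOn U (Set.Ioi 0))
    (hU : ∀ x > (0 : ℝ), HasDerivAt U (u x) x)
    (hu : ∀ x > (0 : ℝ), HasDerivAt u (u' x) x)
    (hle : ∀ x > (0 : ℝ), x * u' x ≤ -c * u x)
    (hunb : ¬ BddAbove (U '' Set.Ioi 0)) :
    ∀ᶠ x in atTop, x * u x / U x ≤ 1 - c / 2 := by
  have hanti : AntitoneOn (fun x => x * u x - (1 - c) * U x) (Set.Ioi 0) := by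
    refine antitoneOn_Ioi_of_hasDerivAt_nonpos
      (fun x hx => ((hasDerivAt_id x).mul (hu x hx)).sub ((hU x hx).const_mul (1 - c))) ?_
    intro x hx
    have := hle x hx
    simp only [id]
    linarith
  set K := 1 * u 1 - (1 - c) * U 1
  -- The error term `K` is absorbed once `U x ≥ 2 K / c`.
  obtain ⟨_, ⟨x₀, hx₀, rfl⟩, hlt⟩ := not_bddAbove_iff.1 hunb (max 0 (2 * K / c))
  filter_upwards [eventually_ge_atTop x₀, eventually_ge_atTop 1] with x hx hx1
  have hxpos : x ∈ Set.Ioi (0 : ℝ) := Set.mem_Ioi.2 (one_pos.trans_le hx1)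
  have hUx : max 0 (2 * K / c) < U x := hlt.trans_le (hmono.monotoneOn hx₀ hxpos hx)
  have hUpos : 0 < U x := (le_max_left _ _).trans_lt hUx
  have hK : 2 * K < U x * c := (div_lt_iff₀ hc).1 ((le_max_right _ _).trans_lt hUx)
  have h : x * u x - (1 - c) * U x ≤ K := hanti (Set.mem_Ioi.2 one_pos) hxpos hx1
  rw [div_le_iff₀ hUpos]
  linarith

/-- The case of a utility that is bounded above; only monotonicity and concavity are used. -/
lemma elasticity_le_of_bddAbove {U u : ℝ → ℝ}
    (hmono : StrictMonoOn U (Set.Ioi 0)) (hconc : StrictConcaveOn ℝ (Set.Ioi 0) U)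
    (hU : ∀ x > (0 : ℝ), HasDerivAt U (u x) x) (hpos : ∀ x > (0 : ℝ), 0 < u x)
    (hb : BddAbove (U '' Set.Ioi 0)) :
    ∀ᶠ x in atTop, x * u x / U x ≤ 1 / 2 := by
  set L := sSup (U '' Set.Ioi 0)
  have hUL : ∀ x > (0 : ℝ), U x ≤ L := fun x hx => le_csSup hb ⟨x, hx, rfl⟩
  rcases le_or_gt L 0 with hL | hL
  · filter_upwards [eventually_gt_atTop 0] with x hx
    have := div_nonpos_of_nonneg_of_nonpos (mul_pos hx (hpos x hx)).le ((hUL x hx).trans hL)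
    linarith
  · obtain ⟨_, ⟨x₀, hx₀, rfl⟩, hlt⟩ :=
      exists_lt_of_lt_csSup (Set.nonempty_Ioi.image U) (show 3 / 4 * L < L by linarith)
    filter_upwards [eventually_ge_atTop (2 * x₀)] with x hx
    have hx₀' : 0 < x₀ := hx₀
    have hx0 : 0 < x := by linarith
    have hx2 : 0 < x / 2 := by linarith
    have hhalf : U x₀ ≤ U (x / 2) := hmono.monotoneOn hx₀ (Set.mem_Ioi.2 hx2) (by linarith)
    have hfull : U (x / 2) < U x := hmono (Set.mem_Ioi.2 hx2) (Set.mem_Ioi.2 hx0) (by linarith)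
    have hslope := hconc.concaveOn.le_slope_of_hasDerivAt (Set.mem_Ioi.2 hx2)
      (Set.mem_Ioi.2 hx0) (by linarith) (hU x hx0)
    rw [slope_def_field, le_div_iff₀ (by linarith)] at hslope
    have := hUL x hx0
    rw [div_le_iff₀ (by linarith)]
    linarith

/-- The claim following Assumption 2 in Kramkov–Sîrbu: a uniform two-sided bound on
the relative risk aversion of `U` implies the Inada conditions (15) and the
asymptotic elasticity condition (16): `limsup_{x→∞} x·U'(x)/U(x) < 1`. -/
theorem bounded_risk_aversion_implies_inada_and_asymptotic_elasticity
    (U : ℝ → ℝ) (c₁ c₂ : ℝ) (hc₁ : 0 < c₁) (hc₁₂ : c₁ < c₂)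
    (hU_mono : StrictMonoOn U (Set.Ioi 0))
    (hU_conc : StrictConcaveOn ℝ (Set.Ioi 0) U)
    (hU_smooth : ContDiffOn ℝ 2 U (Set.Ioi 0))
    (hA : ∀ x > (0 : ℝ),
      c₁ < -(x * deriv (deriv U) x) / deriv U x ∧
        -(x * deriv (deriv U) x) / deriv U x < c₂) :
    Tendsto (deriv U) (𝓝[>] 0) atTop ∧
    Tendsto (deriv U) atTop (𝓝 0) ∧
    Filter.limsup (fun x => x * deriv U x / U x) atTop < 1 := by
  have hU : ∀ x > (0 : ℝ), HasDerivAt U (deriv U x) x := fun x hx =>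
    ((hU_smooth.differentiableOn (by norm_num)).differentiableAt (Ioi_mem_nhds hx)).hasDerivAt
  have hu : ∀ x > (0 : ℝ), HasDerivAt (deriv U) (deriv (deriv U) x) x := fun x hx =>
    (((hU_smooth.deriv_of_isOpen (m := 1) isOpen_Ioi (by norm_num)).differentiableOn
      (by norm_num)).differentiableAt (Ioi_mem_nhds hx)).hasDerivAt
  have hpos : ∀ x > (0 : ℝ), 0 < deriv U x := by
    intro x hx
    have h0 : 0 ≤ deriv U x := by
      rw [← derivWithin_of_isOpen isOpen_Ioi (Set.mem_Ioi.2 hx)]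
      exact hU_mono.monotoneOn.derivWithin_nonneg
    refine h0.lt_of_ne' fun h => ?_
    -- If `U' x = 0`, the quotient in `hA` has the junk value `0`, below `c₁`.
    have := (hA x hx).1
    rw [h, div_zero] at this
    linarith
  have hle : ∀ x > (0 : ℝ), x * deriv (deriv U) x ≤ -c₁ * deriv U x := by
    intro x hx
    have := (lt_div_iff₀ (hpos x hx)).1 (hA x hx).1
    linarith
  obtain ⟨h1, h2⟩ := inada_of_elasticity_le hc₁ hu hpos hle
  refine ⟨h1, h2, ?_⟩
  by_cases hb : BddAbove (U '' Set.Ioi 0)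
  · exact limsup_lt_one_of_eventually_le (by norm_num)
      (elasticity_le_of_bddAbove hU_mono hU_conc hU hpos hb)
  · exact limsup_lt_one_of_eventually_le (by linarith)
      (elasticity_le_of_not_bddAbove hc₁ hU_mono hU hu hle hb)
end
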